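/- arXiv:1502.06338 — 3 statements merged into one kernel-verified Lean document; each statement's English description precedes it below -/
import Mathlib

section
/- (Kolmogorov moment bound for the Donsker line, light-tail case.) Let φ : ℕ → ℝ with φ_i ≥ 0, φ_0 = 0, ∑_{i=1}^∞ φ_i = 1, and assume m := ∑_{i=1}^∞ i φ_i < ∞. Let (a_n)_{n≥1} satisfy 0 < a_n < 1 and n(1−a_n) → λ for some λ > 0. Let (ε_k)_{k≥0} be iid real random variables with E[ε_0] = 0 and E[ε_0²] = 1, define y^n_0 = ε_0, y^n_k = ε_k + ∑_{i=1}^k a_n φ_i y^n_{k−i} for k ≥ 1, and set Z^n_t = ((1−a_n)/√n)(∑_{j=0}^{⌊nt⌋} y^n_j + (nt−⌊nt⌋) y^n_{⌊nt⌋+1}) for t ∈ [0,1]. Then there exists c > 0 such that for every n ≥ 1 and all s, t ∈ [0,1], E[|Z^n_t − Z^n_s|²] ≤ c |t−s|². -/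
open MeasureTheory ProbabilityTheory Filter Set

/-- Convolution powers of a sequence. -/
noncomputable def convPow (φ : ℕ → ℝ) : ℕ → ℕ → ℝ
  | 0 => fun i => if i = 0 then 1 else 0
  | (l + 1) => fun k => ∑ j ∈ Finset.range (k + 1), convPow φ l j * φ (k - j)

/-- ψ^a_i = ∑_{l=0}^∞ a^l (φ^{*l})_i. -/
noncomputable def psiSeq (a : ℝ) (φ : ℕ → ℝ) (i : ℕ) : ℝ :=
  ∑' l : ℕ, a ^ l * convPow φ l i

/-- Fourier transform of a sequence indexed by ℕ. -/
noncomputable def fourierSeq (f : ℕ → ℝ) (z : ℝ) : ℂ :=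
  ∑' k : ℕ, (f k : ℂ) * Complex.exp (-(2 * Real.pi * Complex.I * k * z))

/-- Mittag-Leffler function E_{α,α}. -/
noncomputable def mittagLeffler (α u : ℝ) : ℝ :=
  ∑' k : ℕ, u ^ k / Real.Gamma (α * k + α)

/-- f^{α,λ}. -/
noncomputable def mlDensity (α lam s : ℝ) : ℝ :=
  lam * s ^ (α - 1) * mittagLeffler α (-lam * s ^ α)

/-- F^{α,λ}. -/
noncomputable def mlCDF (α lam x : ℝ) : ℝ :=
  ∫ s in (0:ℝ)..x, mlDensity α lam s

/-- Clamp to the unit interval. -/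
noncomputable def clampU (r : ℝ) : ℝ := max 0 (min 1 r)

lemma clampU_mono {r s : ℝ} (h : r ≤ s) : clampU r ≤ clampU s := by
  unfold clampU; gcongr

lemma sum_clampU (u : ℕ → ℝ) (x : ℝ) (hx : 0 ≤ x) (N : ℕ) (hN : x ≤ N) :
    ∑ j ∈ Finset.range (N + 1), clampU (x - j) * u j
      = ∑ j ∈ Finset.range ⌊x⌋₊, u j + (x - (⌊x⌋₊ : ℝ)) * u ⌊x⌋₊ := by
  have h1 : (⌊x⌋₊ : ℝ) ≤ x := Nat.floor_le hx
  have h2 : x < ⌊x⌋₊ + 1 := Nat.lt_floor_add_one x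
  have hle : ⌊x⌋₊ ≤ N := by
    have : (⌊x⌋₊ : ℝ) ≤ N := h1.trans hN
    exact_mod_cast this
  have hsub : Finset.range (⌊x⌋₊ + 1) ⊆ Finset.range (N + 1) := by
    intro j; simp only [Finset.mem_range]; omega
  rw [← Finset.sum_subset hsub, Finset.sum_range_succ]
  · congr 1
    · refine Finset.sum_congr rfl fun j hj => ?_
      have hj' : j + 1 ≤ ⌊x⌋₊ := Finset.mem_range.1 hj
      have hj2 : (j : ℝ) + 1 ≤ ⌊x⌋₊ := by exact_mod_cast hj'
      have : clampU (x - j) = 1 := by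
        unfold clampU
        rw [min_eq_left (by linarith)]; norm_num
      rw [this, one_mul]
    · have : clampU (x - ⌊x⌋₊) = x - ⌊x⌋₊ := by
        unfold clampU
        rw [min_eq_right (by linarith), max_eq_right (by linarith)]
      rw [this]
  · intro j _ hj
    have hj' : ⌊x⌋₊ + 1 ≤ j := by simpa using hj
    have hj2 : (⌊x⌋₊ : ℝ) + 1 ≤ j := by exact_mod_cast hj'
    have : clampU (x - j) = 0 := by
      unfold clampU
      rw [min_eq_right (by linarith), max_eq_left (by linarith)]
    rw [this, zero_mul]

lemma ar_repr {Ω : Type*} (φ : ℕ → ℝ) (hφnn : ∀ i, 0 ≤ φ i)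
    (hφle : ∀ s : Finset ℕ, ∑ i ∈ s, φ i ≤ 1) (a : ℝ) (ha0 : 0 < a) (ha1 : a < 1)
    (ε : ℕ → Ω → ℝ) (y : ℕ → Ω → ℝ) (hy0 : y 0 = ε 0)
    (hyrec : ∀ k, 1 ≤ k → ∀ ω,
      y k ω = ε k ω + ∑ i ∈ Finset.Icc 1 k, a * φ i * y (k - i) ω) (k : ℕ) :
    ∃ c : ℕ → ℝ, (∀ l, |c l| ≤ 1) ∧ (∀ l, k < l → c l = 0) ∧
      ∀ N, k < N → ∀ ω, y k ω = ∑ l ∈ Finset.range N, c l * ε l ω := by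
  induction k using Nat.strong_induction_on with
  | _ k ih =>
  choose! c hc1 hc0 hcy using ih
  have hrec : ∀ ω, y k ω = ε k ω + ∑ i ∈ Finset.Icc 1 k, a * φ i * y (k - i) ω := by
    intro ω
    rcases Nat.eq_zero_or_pos k with rfl | hk
    · simp [hy0]
    · exact hyrec k hk ω
  have hz : ∀ l, k ≤ l → ∑ i ∈ Finset.Icc 1 k, a * φ i * c (k - i) l = 0 := by
    intro l hl
    refine Finset.sum_eq_zero fun i hi => ?_
    rw [Finset.mem_Icc] at hi
    rw [hc0 (k - i) (by omega) l (by omega), mul_zero]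
  refine ⟨fun l => (if l = k then 1 else 0) + ∑ i ∈ Finset.Icc 1 k, a * φ i * c (k - i) l,
    ?_, ?_, ?_⟩
  · intro l
    by_cases hl : l = k
    · simp [hl, hz k le_rfl]
    · simp only [hl, if_false, zero_add]
      calc |∑ i ∈ Finset.Icc 1 k, a * φ i * c (k - i) l|
          ≤ ∑ i ∈ Finset.Icc 1 k, |a * φ i * c (k - i) l| := Finset.abs_sum_le_sum_abs _ _
        _ ≤ ∑ i ∈ Finset.Icc 1 k, φ i := by
          refine Finset.sum_le_sum fun i hi => ?_
          rw [Finset.mem_Icc] at hi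
          have h1 := hc1 (k - i) (by omega) l
          have h2 := hφnn i
          rw [abs_mul, abs_of_nonneg (by positivity : 0 ≤ a * φ i)]
          calc a * φ i * |c (k - i) l| ≤ 1 * φ i * 1 := by gcongr
            _ = φ i := by ring
        _ ≤ 1 := hφle _
  · intro l hl
    simp [hz l hl.le, hl.ne']
  · intro N hN ω
    rw [hrec ω]
    simp only [add_mul, Finset.sum_add_distrib, ite_mul, one_mul, zero_mul]
    congr 1
    · simp [hN]
    · simp only [Finset.sum_mul]
      rw [Finset.sum_comm]
      refine Finset.sum_congr rfl fun i hi => ?_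
      rw [Finset.mem_Icc] at hi
      rw [hcy (k - i) (by omega) N (by omega) ω, Finset.mul_sum]
      exact Finset.sum_congr rfl fun l _ => by ring

lemma lin_moment {Ω : Type*} [MeasurableSpace Ω] (P : Measure Ω) [IsProbabilityMeasure P]
    (ε : ℕ → Ω → ℝ) (hεindep : iIndepFun ε P)
    (hL2 : ∀ k, MemLp (ε k) 2 P) (hmean : ∀ k, ∫ ω, ε k ω ∂P = 0)
    (hvar : ∀ k, ∫ ω, (ε k ω) ^ 2 ∂P = 1) (c : ℕ → ℝ) (hc : ∀ l, |c l| ≤ 1) (N : ℕ) :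
    MemLp (fun ω => ∑ l ∈ Finset.range N, c l * ε l ω) 2 P ∧
    ∫ ω, (∑ l ∈ Finset.range N, c l * ε l ω) ^ 2 ∂P ≤ N := by
  have hm : ∀ l, MemLp (fun ω => c l * ε l ω) 2 P := fun l => (hL2 l).const_mul _
  have hM : MemLp (fun ω => ∑ l ∈ Finset.range N, c l * ε l ω) 2 P :=
    memLp_finset_sum _ fun l _ => hm l
  refine ⟨hM, ?_⟩
  have hmean0 : ∫ ω, (∑ l ∈ Finset.range N, c l * ε l ω) ∂P = 0 := by
    rw [integral_finset_sum _ fun l _ => (hm l).integrable (by norm_num)]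
    simp [integral_const_mul, hmean]
  have hv := variance_of_integral_eq_zero hM.aestronglyMeasurable.aemeasurable hmean0
  rw [← hv]
  have hfun : (fun ω => ∑ l ∈ Finset.range N, c l * ε l ω)
      = ∑ l ∈ Finset.range N, fun ω => c l * ε l ω := by
    ext ω; simp
  rw [hfun, IndepFun.variance_sum (fun l _ => hm l)]
  · calc ∑ l ∈ Finset.range N, Var[fun ω => c l * ε l ω; P]
        ≤ ∑ l ∈ Finset.range N, (1 : ℝ) := by
          refine Finset.sum_le_sum fun l _ => ?_
          rw [variance_const_mul, variance_of_integral_eq_zero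
            (hL2 l).aestronglyMeasurable.aemeasurable (hmean l), hvar l, mul_one]
          exact (sq_le_one_iff_abs_le_one _).2 (hc l)
      _ = N := by simp
  · intro i _ j _ hij
    exact (hεindep.indepFun hij).comp (measurable_const_mul (c i)) (measurable_const_mul (c j))

/-- Kolmogorov moment bound for the Donsker line, light-tail case:
`E[|Z^n_t − Z^n_s|²] ≤ c |t−s|²`. -/
theorem donsker_line_kolmogorov_light_tail
    {Ω : Type*} [MeasurableSpace Ω] (P : Measure Ω) [IsProbabilityMeasure P]
    (φ : ℕ → ℝ) (hφnn : ∀ i, 0 ≤ φ i) (hφ0 : φ 0 = 0) (hφsum : ∑' i : ℕ, φ i = 1)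
    (m : ℝ) (hm : HasSum (fun i : ℕ => (i : ℝ) * φ i) m)
    (a : ℕ → ℝ) (ha : ∀ n, 1 ≤ n → 0 < a n ∧ a n < 1)
    (lam : ℝ) (hlam : 0 < lam)
    (haconv : Tendsto (fun n : ℕ => (n : ℝ) * (1 - a n)) atTop (nhds lam))
    -- the `ε_k` are iid, square integrable, centered with unit variance
    (ε : ℕ → Ω → ℝ) (hεmeas : ∀ k, Measurable (ε k))
    (hεindep : iIndepFun ε P)
    (hεid : ∀ k, Measure.map (ε k) P = Measure.map (ε 0) P)
    (hεL2 : MemLp (ε 0) 2 P)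
    (hεmean : ∫ ω, ε 0 ω ∂P = 0)
    (hεvar : ∫ ω, (ε 0 ω) ^ 2 ∂P = 1)
    (y : ℕ → ℕ → Ω → ℝ)
    (hy0 : ∀ n, y n 0 = ε 0)
    (hyrec : ∀ n k, 1 ≤ k → ∀ ω,
      y n k ω = ε k ω + ∑ i ∈ Finset.Icc 1 k, a n * φ i * y n (k - i) ω)
    -- the renormalized Donsker line
    (Z : ℕ → ℝ → Ω → ℝ)
    (hZ : ∀ n t ω, Z n t ω = (1 - a n) / Real.sqrt n *
      ((∑ j ∈ Finset.range (⌊(n : ℝ) * t⌋₊ + 1), y n j ω) +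
        ((n : ℝ) * t - (⌊(n : ℝ) * t⌋₊ : ℝ)) * y n (⌊(n : ℝ) * t⌋₊ + 1) ω))
    : ∃ c > 0, ∀ n, 1 ≤ n → ∀ s ∈ Set.Icc (0:ℝ) 1, ∀ t ∈ Set.Icc (0:ℝ) 1,
        ∫ ω, |Z n t ω - Z n s ω| ^ 2 ∂P ≤ c * |t - s| ^ 2 := by
  have hsummable : Summable φ := by
    by_contra h
    rw [tsum_eq_zero_of_not_summable h] at hφsum
    exact zero_ne_one hφsum
  have hφle : ∀ s : Finset ℕ, ∑ i ∈ s, φ i ≤ 1 := fun s => by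
    rw [← hφsum]; exact hsummable.sum_le_tsum s fun i _ => hφnn i
  have hid : ∀ k, IdentDistrib (ε k) (ε 0) P P := fun k =>
    ⟨(hεmeas k).aemeasurable, (hεmeas 0).aemeasurable, hεid k⟩
  have hL2 : ∀ k, MemLp (ε k) 2 P := fun k => (hid k).memLp_iff.2 hεL2
  have hmean : ∀ k, ∫ ω, ε k ω ∂P = 0 := fun k => (hid k).integral_eq.trans hεmean
  have hvar : ∀ k, ∫ ω, (ε k ω) ^ 2 ∂P = 1 := fun k => by
    rw [← hεvar]
    exact ((hid k).comp (measurable_id.pow_const 2)).integral_eq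
  have hy : ∀ n, 1 ≤ n → ∀ k, MemLp (y n k) 2 P ∧ ∫ ω, (y n k ω) ^ 2 ∂P ≤ (k : ℝ) + 1 := by
    intro n hn k
    obtain ⟨c, hc1, -, hcy⟩ := ar_repr φ hφnn hφle (a n) (ha n hn).1 (ha n hn).2 ε (y n)
      (hy0 n) (hyrec n) k
    have he : y n k = fun ω => ∑ l ∈ Finset.range (k + 1), c l * ε l ω :=
      funext (hcy (k + 1) (Nat.lt_succ_self k))
    have h := lin_moment P ε hεindep hL2 hmean hvar c hc1 (k + 1)
    rw [he]
    exact_mod_cast h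
  obtain ⟨B, hB⟩ := haconv.bddAbove_range
  have hB' : ∀ n : ℕ, (n : ℝ) * (1 - a n) ≤ B := fun n => hB ⟨n, rfl⟩
  have key : ∀ n, 1 ≤ n → ∀ s ∈ Set.Icc (0:ℝ) 1, ∀ t ∈ Set.Icc (0:ℝ) 1, s ≤ t →
      ∫ ω, |Z n t ω - Z n s ω| ^ 2 ∂P ≤ (3 * B ^ 2 + 1) * |t - s| ^ 2 := by
    intro n hn s hs t ht hst
    have hn0 : (1 : ℝ) ≤ n := by exact_mod_cast hn
    obtain ⟨ha0, ha1⟩ := ha n hn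
    set w : ℕ → ℝ := fun j => clampU (n * t - j) - clampU (n * s - j) with hw
    have hw0 : ∀ j, 0 ≤ w j := fun j => sub_nonneg.2 (clampU_mono (by gcongr))
    have hrep : ∀ r ∈ Set.Icc (0:ℝ) 1, ∀ u : ℕ → ℝ,
        ∑ j ∈ Finset.range (n + 1), clampU (n * r - j) * u j
        = ∑ j ∈ Finset.range ⌊(n : ℝ) * r⌋₊, u j
          + ((n : ℝ) * r - (⌊(n : ℝ) * r⌋₊ : ℝ)) * u ⌊(n : ℝ) * r⌋₊ := by
      intro r hr u
      refine sum_clampU u _ (mul_nonneg (by linarith) hr.1) n ?_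
      nlinarith [hr.2]
    have hwsum : ∑ j ∈ Finset.range (n + 1), w j = n * (t - s) := by
      have h1 := hrep t ht (fun _ => 1)
      have h2 := hrep s hs (fun _ => 1)
      simp only [mul_one, Finset.sum_const, Finset.card_range, nsmul_eq_mul] at h1 h2
      rw [hw, Finset.sum_sub_distrib, h1, h2]; ring
    have hdiff : ∀ ω, Z n t ω - Z n s ω
        = (1 - a n) / Real.sqrt n * ∑ j ∈ Finset.range (n + 1), w j * y n (j + 1) ω := by
      intro ω
      have h1 := hrep t ht (fun j => y n (j + 1) ω)
      have h2 := hrep s hs (fun j => y n (j + 1) ω)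
      simp only [hw, sub_mul, Finset.sum_sub_distrib]
      rw [h1, h2, hZ, hZ, Finset.sum_range_succ', Finset.sum_range_succ']
      ring
    have hint : ∀ k, Integrable (fun ω => (y n k ω) ^ 2) P := fun k => (hy n hn k).1.integrable_sq
    have hpt : ∀ ω, |Z n t ω - Z n s ω| ^ 2 ≤ ((1 - a n) ^ 2 / n) *
        ((n * (t - s)) * ∑ j ∈ Finset.range (n + 1), w j * (y n (j + 1) ω) ^ 2) := by
      intro ω
      rw [sq_abs, hdiff, mul_pow, div_pow, Real.sq_sqrt (by linarith)]
      refine mul_le_mul_of_nonneg_left ?_ (by positivity)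
      rw [← hwsum]
      refine Finset.sum_sq_le_sum_mul_sum_of_sq_eq_mul _ (fun j _ => hw0 j)
        (fun j _ => mul_nonneg (hw0 j) (sq_nonneg _)) (fun j _ => by ring)
    have hInt : Integrable (fun ω => ((1 - a n) ^ 2 / n) *
        ((n * (t - s)) * ∑ j ∈ Finset.range (n + 1), w j * (y n (j + 1) ω) ^ 2)) P :=
      ((integrable_finset_sum _ fun j _ => (hint (j + 1)).const_mul _).const_mul _).const_mul _
    have hts : 0 ≤ t - s := sub_nonneg.2 hst
    have hnn : (0 : ℝ) < n := by linarith
    have hb0 : 0 ≤ (n : ℝ) * (1 - a n) := mul_nonneg hnn.le (by linarith)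
    calc ∫ ω, |Z n t ω - Z n s ω| ^ 2 ∂P
        ≤ ∫ ω, ((1 - a n) ^ 2 / n) *
          ((n * (t - s)) * ∑ j ∈ Finset.range (n + 1), w j * (y n (j + 1) ω) ^ 2) ∂P :=
          integral_mono_of_nonneg (Eventually.of_forall fun ω => by positivity) hInt
            (Eventually.of_forall hpt)
      _ = ((1 - a n) ^ 2 / n) * ((n * (t - s)) *
          ∑ j ∈ Finset.range (n + 1), w j * ∫ ω, (y n (j + 1) ω) ^ 2 ∂P) := by
          rw [integral_const_mul, integral_const_mul,
            integral_finset_sum _ fun j _ => (hint (j + 1)).const_mul _]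
          simp only [integral_const_mul]
      _ ≤ ((1 - a n) ^ 2 / n) * ((n * (t - s)) *
          ∑ j ∈ Finset.range (n + 1), w j * (3 * n)) := by
          gcongr with j hj
          · exact hw0 j
          · have h1 := (hy n hn (j + 1)).2
            have hj' : j ≤ n := Nat.lt_succ_iff.1 (Finset.mem_range.1 hj)
            have hj2 : (j : ℝ) ≤ n := by exact_mod_cast hj'
            push_cast at h1
            linarith
      _ = 3 * ((n : ℝ) * (1 - a n)) ^ 2 * |t - s| ^ 2 := by
          rw [← Finset.sum_mul, hwsum, sq_abs]
          field_simp
      _ ≤ (3 * B ^ 2 + 1) * |t - s| ^ 2 := by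
          have := pow_le_pow_left₀ hb0 (hB' n) 2
          gcongr
          linarith
  refine ⟨3 * B ^ 2 + 1, by positivity, fun n hn s hs t ht => ?_⟩
  rcases le_total s t with h | h
  · exact key n hn s hs t ht h
  · have := key n hn t ht s hs h
    simpa only [abs_sub_comm] using this
end

section
/- (Kolmogorov moment bound for the Donsker line, heavy-tail case α > 1/2.) Let φ : ℕ → ℝ with φ_i ≥ 0, φ_0 = 0, ∑_{i=1}^∞ φ_i = 1, and assume there exist K > 0 and α ∈ (1/2, 1) such that N^α ∑_{i=N}^∞ φ_i → K as N → ∞. Set δ = K Γ(1−α)/α, and let (a_n)_{n≥1} satisfy 0 < a_n < 1 and n^α(1−a_n) → λδ for some λ > 0. Let (ε_k)_{k≥0} be iid real random variables with E[ε_0] = 0 and E[ε_0²] = 1, define y^n_0 = ε_0, y^n_k = ε_k + ∑_{i=1}^k a_n φ_i y^n_{k−i} for k ≥ 1, and set Z^n_t = ((1−a_n)/√n)(∑_{j=0}^{⌊nt⌋} y^n_j + (nt−⌊nt⌋) y^n_{⌊nt⌋+1}) for t ∈ [0,1]. Then there exists c > 0 such that for every n ≥ 1 and all s, t ∈ [0,1],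 E[|Z^n_t − Z^n_s|²] ≤ c |t−s|². -/
open MeasureTheory ProbabilityTheory Filter Set

lemma exists_renewal (b : ℕ → ℝ) (hb : ∀ k, 0 ≤ b k) (hb0 : b 0 = 0) :
    ∃ u : ℕ → ℝ, (∀ k, 0 ≤ u k) ∧
      (∀ k, u k = (if k = 0 then 1 else 0) + ∑ i ∈ Finset.range (k + 1), b i * u (k - i)) ∧
      PowerSeries.mk u * (1 - PowerSeries.mk b) = 1 := by
  set U : PowerSeries ℝ := (1 - PowerSeries.mk b)⁻¹ with hU
  have h1 : U * (1 - PowerSeries.mk b) = 1 := by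
    apply PowerSeries.inv_mul_cancel
    simp [hb0]
  have hmk : PowerSeries.mk (fun k => PowerSeries.coeff k U) = U := by
    ext k; simp
  have hrec : ∀ k, PowerSeries.coeff k U = (if k = 0 then 1 else 0) +
      ∑ i ∈ Finset.range (k + 1), b i * PowerSeries.coeff (k - i) U := by
    intro k
    have h2 : U = 1 + PowerSeries.mk b * U := by linear_combination h1
    have h3 := congrArg (PowerSeries.coeff k) h2
    rw [map_add, PowerSeries.coeff_one, PowerSeries.coeff_mul,
      Finset.Nat.sum_antidiagonal_eq_sum_range_succ_mk] at h3
    simpa using h3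
  refine ⟨fun k => PowerSeries.coeff k U, ?_, hrec, by rw [hmk, h1]⟩
  intro k
  induction k using Nat.strong_induction_on with
  | _ k ih =>
    simp only
    rw [hrec]
    refine add_nonneg (by split_ifs <;> norm_num) (Finset.sum_nonneg ?_)
    intro i hi
    rcases Nat.eq_zero_or_pos i with rfl | hpos
    · simp [hb0]
    · exact mul_nonneg (hb i) (ih _ (by have := Finset.mem_range.1 hi; omega))

lemma renewal_partial (b u : ℕ → ℝ) (hb : ∀ k, 0 ≤ b k) (hu : ∀ k, 0 ≤ u k)
    (hrec : ∀ k, u k = (if k = 0 then 1 else 0) + ∑ i ∈ Finset.range (k + 1), b i * u (k - i))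
    (a : ℝ) (ha : a < 1) (hs : HasSum b a) (N : ℕ) :
    ∑ k ∈ Finset.range N, u k ≤ 1 / (1 - a) := by
  have h1 : ∑ k ∈ Finset.range N, u k ≤ 1 + a * ∑ k ∈ Finset.range N, u k := by
    calc ∑ k ∈ Finset.range N, u k
        = ∑ k ∈ Finset.range N, (if k = 0 then (1:ℝ) else 0) +
          ∑ k ∈ Finset.range N, ∑ i ∈ Finset.range (k + 1), b i * u (k - i) := by
          rw [← Finset.sum_add_distrib]
          exact Finset.sum_congr rfl fun k _ => hrec k
      _ ≤ 1 + ∑ m ∈ Finset.range N, ∑ k ∈ Finset.range (N - m), b m * u k := by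
          rw [Finset.sum_range_diag_flip N (fun i j => b i * u j)]
          gcongr
          rw [Finset.sum_ite_eq']
          split_ifs <;> norm_num
      _ ≤ 1 + ∑ m ∈ Finset.range N, b m * ∑ k ∈ Finset.range N, u k := by
          gcongr with m hm
          rw [← Finset.mul_sum]
          refine mul_le_mul_of_nonneg_left ?_ (hb m)
          exact Finset.sum_le_sum_of_subset_of_nonneg
            (Finset.range_mono (Nat.sub_le _ _)) fun _ _ _ => hu _
      _ ≤ 1 + a * ∑ k ∈ Finset.range N, u k := by
          rw [← Finset.sum_mul]
          gcongr
          · exact Finset.sum_nonneg fun _ _ => hu _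
          · exact sum_le_hasSum _ (fun i _ => hb i) hs
  rw [le_div_iff₀ (by linarith)]
  linarith

/-- the character -/
noncomputable def ech (θ : ℝ) : ℂ := Complex.exp (θ * Complex.I)

lemma norm_ech_pow (θ : ℝ) (k : ℕ) : ‖ech θ ^ k‖ = 1 := by
  rw [norm_pow, ech, Complex.norm_exp_ofReal_mul_I, one_pow]

lemma ech_pow_re (θ : ℝ) (k : ℕ) : (ech θ ^ k).re = Real.cos (k * θ) := by
  rw [ech, ← Complex.exp_nat_mul, ← Complex.exp_ofReal_mul_I_re]
  congr 2; push_cast; ring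

lemma ech_pow_im (θ : ℝ) (k : ℕ) : (ech θ ^ k).im = Real.sin (k * θ) := by
  rw [ech, ← Complex.exp_nat_mul, ← Complex.exp_ofReal_mul_I_im]
  congr 2; push_cast; ring

lemma summable_ech (u : ℕ → ℝ) (hu : ∀ k, 0 ≤ u k) (hs : Summable u) (θ : ℝ) :
    Summable fun k => ‖(u k : ℂ) * ech θ ^ k‖ := by
  refine hs.congr fun k => ?_
  rw [norm_mul, norm_ech_pow, mul_one, Complex.norm_of_nonneg (hu k)]

lemma renewal_fourier (b u : ℕ → ℝ) (hb : ∀ k, 0 ≤ b k) (hu : ∀ k, 0 ≤ u k)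
    (hrec : ∀ k, u k = (if k = 0 then 1 else 0) + ∑ i ∈ Finset.range (k + 1), b i * u (k - i))
    (hbs : Summable b) (hus : Summable u) (θ : ℝ) :
    (∑' k, (u k : ℂ) * ech θ ^ k) * (1 - ∑' k, (b k : ℂ) * ech θ ^ k) = 1 := by
  have h := tsum_mul_tsum_eq_tsum_sum_range_of_summable_norm (summable_ech b hb hbs θ)
    (summable_ech u hu hus θ)
  have hS := summable_ech u hu hus θ |>.of_norm
  have h2 : ∀ k, ∑ i ∈ Finset.range (k + 1), (b i : ℂ) * ech θ ^ i * ((u (k - i) : ℂ) * ech θ ^ (k - i))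
      = (u k : ℂ) * ech θ ^ k - (if k = 0 then 1 else 0) := by
    intro k
    have : ∀ i ∈ Finset.range (k + 1), (b i : ℂ) * ech θ ^ i * ((u (k - i) : ℂ) * ech θ ^ (k - i))
        = ((b i * u (k - i) : ℝ) : ℂ) * ech θ ^ k := by
      intro i hi
      have : ech θ ^ k = ech θ ^ i * ech θ ^ (k - i) := by
        rw [← pow_add]; congr 1; have := Finset.mem_range.1 hi; omega
      rw [this]; push_cast; ring
    rw [Finset.sum_congr rfl this, ← Finset.sum_mul, ← Complex.ofReal_sum]
    have h3 : ∑ i ∈ Finset.range (k + 1), b i * u (k - i) = u k - (if k = 0 then 1 else 0) := by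
      linarith [hrec k]
    rw [h3]
    split_ifs with h0
    · subst h0; push_cast; ring
    · simp
  simp_rw [h2] at h
  rw [Summable.tsum_sub hS (by exact (hasSum_ite_eq 0 (1:ℂ)).summable), tsum_ite_eq] at h
  linear_combination -h

lemma renewal_norm_le (b u : ℕ → ℝ) (hb : ∀ k, 0 ≤ b k) (hu : ∀ k, 0 ≤ u k)
    (hrec : ∀ k, u k = (if k = 0 then 1 else 0) + ∑ i ∈ Finset.range (k + 1), b i * u (k - i))
    (hbs : Summable b) (hus : Summable u) (θ : ℝ) (L : ℝ) (hL : 0 < L)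
    (h : L ≤ 1 - ∑' k, b k * Real.cos (k * θ)) :
    ‖∑' k, (u k : ℂ) * ech θ ^ k‖ ≤ 1 / L := by
  have h1 := congrArg norm (renewal_fourier b u hb hu hrec hbs hus θ)
  rw [norm_mul, norm_one] at h1
  have hre : (1 - ∑' k, (b k : ℂ) * ech θ ^ k).re = 1 - ∑' k, b k * Real.cos (k * θ) := by
    rw [Complex.sub_re, Complex.re_tsum (summable_ech b hb hbs θ).of_norm]
    simp [← ech_pow_re]
  have h2 : L ≤ ‖1 - ∑' k, (b k : ℂ) * ech θ ^ k‖ :=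
    (h.trans_eq hre.symm).trans (Complex.re_le_norm _)
  rw [le_div_iff₀ hL, ← h1]
  gcongr

lemma tri_coeff (δ : ℝ) (hδ : 0 < δ) (m : ℝ) :
    0 ≤ ∫ θ in (0:ℝ)..δ, (1 - θ / δ) * Real.cos (m * θ) := by
  rcases eq_or_ne m 0 with rfl | hm
  · apply intervalIntegral.integral_nonneg hδ.le
    intro θ hθ
    have : θ / δ ≤ 1 := by rw [div_le_one hδ]; exact hθ.2
    simp; linarith
  · have : ∀ θ ∈ uIcc 0 δ, HasDerivAt (fun θ => (1 - θ / δ) * (Real.sin (m * θ) / m)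
        - Real.cos (m * θ) / (m ^ 2 * δ)) ((1 - θ / δ) * Real.cos (m * θ)) θ := by
      intro θ _
      have h0 : HasDerivAt (fun θ : ℝ => m * θ) m θ := by simpa using (hasDerivAt_id θ).const_mul m
      have h1 := (h0.sin.div_const m)
      have h2 := (h0.cos.div_const (m ^ 2 * δ))
      have h3 : HasDerivAt (fun θ : ℝ => 1 - θ / δ) (-(1 / δ)) θ := by
        simpa using ((hasDerivAt_id θ).div_const δ).const_sub 1
      refine HasDerivAt.congr_deriv ((h3.mul h1).sub h2) ?_
      have hd := hδ.ne'
      field_simp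
      ring
    rw [intervalIntegral.integral_eq_sub_of_hasDerivAt this
      (Continuous.intervalIntegrable (by fun_prop) _ _)]
    have h5 := Real.cos_le_one (m * δ)
    have h6 : 0 < m ^ 2 * δ := by positivity
    have h7 : Real.cos (m * δ) / (m ^ 2 * δ) ≤ 1 / (m ^ 2 * δ) := by gcongr
    simp only [div_self hδ.ne', sub_self, zero_mul, mul_zero, Real.sin_zero, zero_div,
      Real.cos_zero]
    linarith

lemma tri_coeff_zero (δ : ℝ) (hδ : 0 < δ) :
    ∫ θ in (0:ℝ)..δ, (1 - θ / δ) = δ / 2 := by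
  rw [intervalIntegral.integral_sub (by simp) (Continuous.intervalIntegrable (by fun_prop) _ _),
    intervalIntegral.integral_div]
  simp
  field_simp
  ring

lemma normsq_expand (u : ℕ → ℝ) (N : ℕ) (θ : ℝ) :
    ‖∑ k ∈ Finset.range N, (u k : ℂ) * ech θ ^ k‖ ^ 2 =
      ∑ j ∈ Finset.range N, ∑ k ∈ Finset.range N, u j * u k * Real.cos (((j:ℝ) - k) * θ) := by
  rw [← Complex.normSq_eq_norm_sq, Complex.normSq_apply, Complex.re_sum, Complex.im_sum,
    Finset.sum_mul_sum, Finset.sum_mul_sum, ← Finset.sum_add_distrib]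
  refine Finset.sum_congr rfl fun j _ => ?_
  rw [← Finset.sum_add_distrib]
  refine Finset.sum_congr rfl fun k _ => ?_
  simp only [Complex.re_ofReal_mul, Complex.im_ofReal_mul, ech_pow_re, ech_pow_im]
  rw [sub_mul, Real.cos_sub]; ring

lemma finite_wiener (u : ℕ → ℝ) (hu : ∀ k, 0 ≤ u k) (N : ℕ) (δ : ℝ) (hδ : 0 < δ) :
    δ / 2 * ∑ k ∈ Finset.range N, u k ^ 2 ≤
      ∫ θ in (0:ℝ)..δ, ‖∑ k ∈ Finset.range N, (u k : ℂ) * ech θ ^ k‖ ^ 2 := by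
  have hc : Continuous fun θ : ℝ => ‖∑ k ∈ Finset.range N, (u k : ℂ) * ech θ ^ k‖ ^ 2 := by
    unfold ech; fun_prop
  calc δ / 2 * ∑ k ∈ Finset.range N, u k ^ 2
      ≤ ∑ j ∈ Finset.range N, ∑ k ∈ Finset.range N, u j * u k *
          ∫ θ in (0:ℝ)..δ, (1 - θ / δ) * Real.cos (((j:ℝ) - k) * θ) := by
        rw [Finset.mul_sum]
        refine Finset.sum_le_sum fun j hj => ?_
        have := Finset.single_le_sum (f := fun k : ℕ => u j * u k *
          ∫ θ in (0:ℝ)..δ, (1 - θ / δ) * Real.cos (((j:ℝ) - k) * θ)) (s := Finset.range N)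
          (fun k _ => mul_nonneg (mul_nonneg (hu j) (hu k)) (tri_coeff δ hδ _)) hj
        refine le_trans (le_of_eq ?_) this
        simp only [sub_self, zero_mul, Real.cos_zero, mul_one]
        rw [tri_coeff_zero δ hδ]; ring
    _ = ∫ θ in (0:ℝ)..δ, (1 - θ / δ) * ‖∑ k ∈ Finset.range N, (u k : ℂ) * ech θ ^ k‖ ^ 2 := by
        simp_rw [normsq_expand, Finset.mul_sum]
        rw [intervalIntegral.integral_finsetSum]
        · refine Finset.sum_congr rfl fun j _ => ?_
          rw [intervalIntegral.integral_finsetSum]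
          · refine Finset.sum_congr rfl fun k _ => ?_
            rw [← intervalIntegral.integral_const_mul]
            congr 1; ext θ; ring
          · intro k _
            exact Continuous.intervalIntegrable (by fun_prop) _ _
        · intro k _
          exact Continuous.intervalIntegrable (by fun_prop) _ _
    _ ≤ _ := by
        apply intervalIntegral.integral_mono_on hδ.le
          (Continuous.intervalIntegrable (by fun_prop) _ _) (hc.intervalIntegrable _ _)
        intro θ hθ
        have : 0 ≤ θ / δ := div_nonneg hθ.1 hδ.le
        nlinarith [sq_nonneg ‖∑ k ∈ Finset.range N, (u k : ℂ) * ech θ ^ k‖]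

set_option maxHeartbeats 1000000 in
lemma window_bound (φ : ℕ → ℝ) (hφnn : ∀ i, 0 ≤ φ i) (hφsum : HasSum φ 1)
    (K α : ℝ) (hK : 0 < K) (hα1 : α < 1) (hαhalf : 1 / 2 < α)
    (htail : Tendsto (fun N : ℕ => (N : ℝ) ^ α * ∑' i : ℕ, φ (N + i)) atTop (nhds K)) :
    ∃ c > 0, ∃ δ > 0, ∀ θ : ℝ, 0 < θ → θ ≤ δ → ∀ a : ℝ, 0 ≤ a → a ≤ 1 →
      c * θ ^ α ≤ 1 - ∑' k : ℕ, (a * φ k) * Real.cos (k * θ) := by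
  have hα0 : 0 < α := by linarith
  have hpi := Real.pi_pos
  have e1 := htail.eventually (lt_mem_nhds (show 9 / 10 * K < K by linarith))
  have e2 := htail.eventually (gt_mem_nhds (show K < 11 / 10 * K by linarith))
  obtain ⟨M, hM⟩ := eventually_atTop.1 (e1.and e2)
  set X : ℝ := max 10 M with hX
  have hX10 : 10 ≤ X := le_max_left _ _
  refine ⟨K / 10 / (Real.pi / 2) ^ α, by positivity, Real.pi / 2 / X, by positivity, ?_⟩
  intro θ hθ hθδ a ha0 ha1
  set x : ℝ := Real.pi / 2 / θ with hx
  have hxX : X ≤ x := by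
    rw [hx, le_div_iff₀ hθ]
    rw [le_div_iff₀ (by linarith)] at hθδ
    linarith
  have hxpos : 0 < x := by linarith
  have hxθ : x * θ = Real.pi / 2 := by rw [hx]; field_simp
  set N1 := ⌈x⌉₊ with hN1
  set N2 := ⌊3 * x⌋₊ + 1 with hN2
  have hN1a : x ≤ N1 := Nat.le_ceil x
  have hN1b : (N1 : ℝ) ≤ 11 / 10 * x := by
    have := Nat.ceil_lt_add_one hxpos.le
    linarith
  have hN2a : 3 * x ≤ N2 := by
    have := Nat.lt_floor_add_one (3 * x)
    rw [hN2]; push_cast; linarith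
  have hN12 : N1 ≤ N2 := by
    have : (N1 : ℝ) ≤ N2 := by linarith
    exact_mod_cast this
  have hMN1 : M ≤ N1 := by
    have : (M : ℝ) ≤ N1 := by linarith [le_max_right (10:ℝ) (M:ℝ)]
    exact_mod_cast this
  have hT : ∀ N : ℕ, ∑' i : ℕ, φ (N + i) = 1 - ∑ i ∈ Finset.range N, φ i := by
    intro N
    have := hφsum.summable.sum_add_tsum_nat_add N
    rw [hφsum.tsum_eq] at this
    simp_rw [add_comm N]
    linarith
  have hxa : 0 < x ^ α := by positivity
  have t1 : 9 / 10 * K / (11 / 10 * x ^ α) ≤ 1 - ∑ i ∈ Finset.range N1, φ i := by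
    have h := (hM N1 hMN1).1
    rw [hT] at h
    have h2 : (N1 : ℝ) ^ α ≤ 11 / 10 * x ^ α := by
      calc (N1 : ℝ) ^ α ≤ (11 / 10 * x) ^ α := by gcongr
        _ = (11 / 10) ^ α * x ^ α := Real.mul_rpow (by norm_num) hxpos.le
        _ ≤ (11 / 10) ^ (1:ℝ) * x ^ α := by
            gcongr; norm_num
        _ = _ := by rw [Real.rpow_one]
    have h3 : 0 < (N1 : ℝ) ^ α := Real.rpow_pos_of_pos (by linarith) _
    have h4 : 0 ≤ 1 - ∑ i ∈ Finset.range N1, φ i := by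
      rw [← hT]; exact tsum_nonneg fun _ => hφnn _
    rw [div_le_iff₀ (by positivity)]
    nlinarith
  have t2 : 1 - ∑ i ∈ Finset.range N2, φ i ≤ 11 / 10 * K / (17 / 10 * x ^ α) := by
    have h := (hM N2 (hMN1.trans hN12)).2
    rw [hT] at h
    have h2 : 17 / 10 * x ^ α ≤ (N2 : ℝ) ^ α := by
      calc 17 / 10 * x ^ α ≤ (3:ℝ) ^ (1 / 2 : ℝ) * x ^ α := by
            gcongr
            rw [← Real.sqrt_eq_rpow]
            apply Real.le_sqrt_of_sq_le; norm_num
        _ ≤ 3 ^ α * x ^ α := by gcongr; norm_num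
        _ = (3 * x) ^ α := (Real.mul_rpow (by norm_num) hxpos.le).symm
        _ ≤ _ := by gcongr
    have h4 : 0 ≤ 1 - ∑ i ∈ Finset.range N2, φ i := by
      rw [← hT]; exact tsum_nonneg fun _ => hφnn _
    rw [le_div_iff₀ (by positivity)]
    nlinarith
  have t3 : K / 10 / x ^ α ≤ ∑ i ∈ Finset.Ico N1 N2, φ i := by
    rw [Finset.sum_Ico_eq_sub _ hN12]
    have e1 : 9 / 10 * K / (11 / 10 * x ^ α) = 9 / 11 * (K / x ^ α) := by field_simp
    have e2 : 11 / 10 * K / (17 / 10 * x ^ α) = 11 / 17 * (K / x ^ α) := by field_simp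
    have e3 : K / 10 / x ^ α = 1 / 10 * (K / x ^ α) := by field_simp
    have : 0 < K / x ^ α := by positivity
    rw [e1] at t1
    rw [e2] at t2
    rw [e3]
    linarith
  have hxt : x ^ α = (Real.pi / 2) ^ α / θ ^ α := by
    rw [hx, Real.div_rpow (by positivity) hθ.le]
  have hθa : 0 < θ ^ α := by positivity
  have hpa : 0 < (Real.pi / 2) ^ α := by positivity
  have e4 : K / 10 / (Real.pi / 2) ^ α * θ ^ α = K / 10 / x ^ α := by
    rw [hxt]; field_simp
  have hsc : Summable fun k : ℕ => (a * φ k) * Real.cos (k * θ) := by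
    refine Summable.of_norm_bounded hφsum.summable fun k => ?_
    rw [Real.norm_eq_abs, abs_mul, abs_mul, abs_of_nonneg ha0, abs_of_nonneg (hφnn k)]
    have := Real.abs_cos_le_one (k * θ)
    have h5 : a * φ k ≤ φ k := mul_le_of_le_one_left (hφnn k) ha1
    have h6 : 0 ≤ a * φ k := mul_nonneg ha0 (hφnn k)
    exact (mul_le_of_le_one_right h6 this).trans h5
  rw [e4, ← hφsum.tsum_eq, ← Summable.tsum_sub hφsum.summable hsc]
  refine t3.trans ?_
  refine le_trans ?_ (Summable.sum_le_tsum (Finset.Ico N1 N2) ?_ (hφsum.summable.sub hsc))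
  · refine Finset.sum_le_sum fun k hk => ?_
    rw [Finset.mem_Ico] at hk
    have k1 : x ≤ k := hN1a.trans (by exact_mod_cast hk.1)
    have k2 : (k:ℝ) ≤ 3 * x := by
      have : k ≤ ⌊3 * x⌋₊ := by omega
      exact (Nat.le_floor_iff (by positivity)).1 this
    have hcos : Real.cos (k * θ) ≤ 0 := by
      apply Real.cos_nonpos_of_pi_div_two_le_of_le
      · rw [← hxθ]; gcongr
      · have := mul_le_mul_of_nonneg_right k2 hθ.le
        linarith
    have h6 : 0 ≤ a * φ k := mul_nonneg ha0 (hφnn k)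
    have h7 := mul_nonpos_of_nonneg_of_nonpos h6 hcos
    linarith
  · intro k _
    have := Real.cos_le_one (k * θ)
    have h5 : a * φ k ≤ φ k := mul_le_of_le_one_left (hφnn k) ha1
    have h6 : 0 ≤ a * φ k := mul_nonneg ha0 (hφnn k)
    exact sub_nonneg.2 ((mul_le_of_le_one_right h6 this).trans h5)

lemma sum_sq_bound (φ u : ℕ → ℝ) (a : ℝ) (hφnn : ∀ i, 0 ≤ φ i) (hφsum : HasSum φ 1)
    (ha0 : 0 ≤ a) (ha1 : a < 1) (hu : ∀ k, 0 ≤ u k)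
    (hrec : ∀ k, u k = (if k = 0 then 1 else 0) +
      ∑ i ∈ Finset.range (k + 1), (a * φ i) * u (k - i))
    (α c δ : ℝ) (hα : 1 / 2 < α) (hc : 0 < c) (hδ : 0 < δ)
    (hw : ∀ θ : ℝ, 0 < θ → θ ≤ δ →
      c * θ ^ α ≤ 1 - ∑' k : ℕ, (a * φ k) * Real.cos (k * θ))
    (η : ℝ) (hη : 0 < η) (hηδ : η ≤ δ) (M : ℕ) :
    ∑ k ∈ Finset.range M, u k ^ 2 ≤ 2 / δ * (η * (1 / (1 - a)) ^ 2 +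
      (2 / c ^ 2 * (η ^ (1 - 2 * α) / (2 * α - 1)) + 2 * δ)) := by
  have hb : ∀ k, 0 ≤ a * φ k := fun k => mul_nonneg ha0 (hφnn k)
  have hbs : HasSum (fun k => a * φ k) a := by simpa using hφsum.mul_left a
  have hpart := renewal_partial (fun k => a * φ k) u hb hu hrec a ha1 hbs
  have hus : Summable u := summable_of_sum_range_le hu hpart
  have htl : Tendsto (fun N => ∑' k, u (k + N)) atTop (nhds 0) := tendsto_sum_nat_add u
  obtain ⟨N, hNM, hN⟩ : ∃ N, M ≤ N ∧ ∑' k, u (k + N) < 1 := by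
    obtain ⟨N, hN⟩ := ((eventually_ge_atTop M).and
      (htl.eventually (gt_mem_nhds one_pos))).exists
    exact ⟨N, hN⟩
  have hmono : ∑ k ∈ Finset.range M, u k ^ 2 ≤ ∑ k ∈ Finset.range N, u k ^ 2 :=
    Finset.sum_le_sum_of_subset_of_nonneg (Finset.range_mono hNM) fun _ _ _ => sq_nonneg _
  have hwien := finite_wiener u hu N δ hδ
  set F : ℝ → ℝ := fun θ => ‖∑ k ∈ Finset.range N, (u k : ℂ) * ech θ ^ k‖ ^ 2 with hF
  have hFc : Continuous F := by
    simp only [hF, ech]; fun_prop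
  have hF1 : ∀ θ, F θ ≤ (1 / (1 - a)) ^ 2 := by
    intro θ
    have : ‖∑ k ∈ Finset.range N, (u k : ℂ) * ech θ ^ k‖ ≤ 1 / (1 - a) := by
      refine (norm_sum_le _ _).trans (le_trans (le_of_eq ?_) (hpart N))
      refine Finset.sum_congr rfl fun k _ => ?_
      rw [norm_mul, norm_ech_pow, mul_one, Complex.norm_of_nonneg (hu k)]
    simp only [hF]
    gcongr
  have hF2 : ∀ θ, 0 < θ → θ ≤ δ → F θ ≤ 2 / c ^ 2 * θ ^ (-2 * α) + 2 := by
    intro θ h0 h1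
    have hU := renewal_norm_le (fun k => a * φ k) u hb hu hrec hbs.summable hus θ (c * θ ^ α)
      (by positivity) (hw θ h0 h1)
    have hs := summable_ech u hu hus θ
    have hsplit := hs.of_norm.sum_add_tsum_nat_add N
    have htail : ‖∑' k, (u (k + N) : ℂ) * ech θ ^ (k + N)‖ ≤ 1 := by
      have h3 := (summable_nat_add_iff N).2 hs
      refine (norm_tsum_le_tsum_norm h3).trans (le_trans (le_of_eq ?_) hN.le)
      refine tsum_congr fun k => ?_
      rw [norm_mul, norm_ech_pow, mul_one, Complex.norm_of_nonneg (hu _)]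
    have h4 : ‖∑ k ∈ Finset.range N, (u k : ℂ) * ech θ ^ k‖ ≤ 1 / (c * θ ^ α) + 1 := by
      rw [eq_sub_of_add_eq hsplit]
      refine (norm_sub_le _ _).trans ?_
      linarith
    have h5 : θ ^ (-2 * α) = (1 / θ ^ α) ^ 2 := by
      rw [one_div, ← Real.rpow_neg h0.le, ← Real.rpow_natCast, ← Real.rpow_mul h0.le]
      congr 1; push_cast; ring
    simp only [hF]
    calc _ ≤ (1 / (c * θ ^ α) + 1) ^ 2 := by gcongr
      _ ≤ 2 * (1 / (c * θ ^ α)) ^ 2 + 2 := by nlinarith [sq_nonneg (1 / (c * θ ^ α) - 1)]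
      _ = _ := by rw [h5]; field_simp
  have hint : ∫ θ in (0:ℝ)..δ, F θ ≤ η * (1 / (1 - a)) ^ 2 +
      (2 / c ^ 2 * (η ^ (1 - 2 * α) / (2 * α - 1)) + 2 * δ) := by
    rw [← intervalIntegral.integral_add_adjacent_intervals
      (hFc.intervalIntegrable (μ := volume) 0 η) (hFc.intervalIntegrable (μ := volume) η δ)]
    have i1 : ∫ θ in (0:ℝ)..η, F θ ≤ η * (1 / (1 - a)) ^ 2 := by
      have := intervalIntegral.integral_mono_on hη.le (hFc.intervalIntegrable 0 η)
        (intervalIntegrable_const (μ := volume) (c := (1 / (1 - a)) ^ 2)) fun θ _ => hF1 θ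
      simpa using this
    have hnz : (0:ℝ) ∉ uIcc η δ := by
      rw [uIcc_of_le hηδ]; intro h; linarith [h.1]
    have hri : IntervalIntegrable (fun θ : ℝ => θ ^ (-2 * α)) volume η δ :=
      intervalIntegral.intervalIntegrable_rpow (Or.inr hnz)
    have i2 : ∫ θ in η..δ, F θ ≤ 2 / c ^ 2 * (η ^ (1 - 2 * α) / (2 * α - 1)) + 2 * δ := by
      have h1 := intervalIntegral.integral_mono_on hηδ (hFc.intervalIntegrable η δ)
        ((hri.const_mul (2 / c ^ 2)).add (intervalIntegrable_const (μ := volume) (c := (2:ℝ))))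
        fun θ hθ => hF2 θ (hη.trans_le hθ.1) hθ.2
      rw [intervalIntegral.integral_add (hri.const_mul _) intervalIntegrable_const,
        intervalIntegral.integral_const_mul,
        integral_rpow (Or.inr ⟨by linarith, hnz⟩)] at h1
      refine h1.trans ?_
      have e : -2 * α + 1 = 1 - 2 * α := by ring
      rw [e]
      have h2 : (δ ^ (1 - 2 * α) - η ^ (1 - 2 * α)) / (1 - 2 * α)
          ≤ η ^ (1 - 2 * α) / (2 * α - 1) := by
        have : (δ ^ (1 - 2 * α) - η ^ (1 - 2 * α)) / (1 - 2 * α)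
          = (η ^ (1 - 2 * α) - δ ^ (1 - 2 * α)) / (2 * α - 1) := by
          rw [← neg_sub (2 * α) 1, div_neg, ← neg_div, neg_sub]
        rw [this]
        have h3 : 0 ≤ δ ^ (1 - 2 * α) := by positivity
        have h4 : 0 < 2 * α - 1 := by linarith
        gcongr
        linarith
      have h5 : 0 < 2 / c ^ 2 := by positivity
      simp only [intervalIntegral.integral_const, smul_eq_mul]
      refine add_le_add (mul_le_mul_of_nonneg_left h2 h5.le) ?_
      linarith
    linarith
  have h9 := hwien.trans hint
  have h10 : ∑ k ∈ Finset.range N, u k ^ 2 = 2 / δ * (δ / 2 * ∑ k ∈ Finset.range N, u k ^ 2) := by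
    field_simp
  refine hmono.trans ?_
  rw [h10]
  gcongr

lemma interp_sum (x : ℝ) (hx : 0 ≤ x) (y : ℕ → ℝ) (N : ℕ) (hN : ⌊x⌋₊ + 2 ≤ N) :
    (∑ j ∈ Finset.range (⌊x⌋₊ + 1), y j) + (x - (⌊x⌋₊ : ℝ)) * y (⌊x⌋₊ + 1) =
      ∑ j ∈ Finset.range N, min 1 (max 0 (x + 1 - j)) * y j := by
  have h1 := Nat.floor_le hx
  have h2 := Nat.lt_floor_add_one x
  have hsub : ∑ j ∈ Finset.range (⌊x⌋₊ + 2), min 1 (max 0 (x + 1 - j)) * y j =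
      ∑ j ∈ Finset.range N, min 1 (max 0 (x + 1 - j)) * y j := by
    refine Finset.sum_subset (Finset.range_mono hN) ?_
    intro j _ hj
    have : (⌊x⌋₊ : ℝ) + 2 ≤ j := by
      exact_mod_cast not_lt.1 (fun h => hj (Finset.mem_range.2 h))
    rw [max_eq_left (by linarith), min_eq_right (by norm_num), zero_mul]
  rw [← hsub, Finset.sum_range_succ _ (⌊x⌋₊ + 1)]
  · congr 1
    · refine Finset.sum_congr rfl fun j hj => ?_
      have : (j:ℝ) ≤ ⌊x⌋₊ := by
        exact_mod_cast Nat.lt_succ_iff.1 (Finset.mem_range.1 hj)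
      rw [max_eq_right (by linarith), min_eq_left (by linarith), one_mul]
    · push_cast
      rw [max_eq_right (by linarith), min_eq_right (by linarith)]
      ring

lemma y_moment {Ω : Type*} [MeasurableSpace Ω] (P : Measure Ω) [IsProbabilityMeasure P]
    (ε : ℕ → Ω → ℝ) (hεmeas : ∀ k, Measurable (ε k))
    (hεindep : iIndepFun ε P)
    (hεid : ∀ k, Measure.map (ε k) P = Measure.map (ε 0) P)
    (hεL2 : MemLp (ε 0) 2 P)
    (hεmean : ∫ ω, ε 0 ω ∂P = 0)
    (hεvar : ∫ ω, (ε 0 ω) ^ 2 ∂P = 1) (u : ℕ → ℝ) (k : ℕ) (Y : Ω → ℝ)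
    (hY : ∀ ω, Y ω = ∑ j ∈ Finset.range (k + 1), u (k - j) * ε j ω) :
    MemLp Y 2 P ∧ ∫ ω, Y ω ^ 2 ∂P = ∑ j ∈ Finset.range (k + 1), u j ^ 2 := by
  have hid : ∀ j, IdentDistrib (ε j) (ε 0) P P := fun j =>
    ⟨(hεmeas j).aemeasurable, (hεmeas 0).aemeasurable, hεid j⟩
  have hL2 : ∀ j, MemLp (ε j) 2 P := fun j => (hid j).memLp_iff.2 hεL2
  have hmean : ∀ j, ∫ ω, ε j ω ∂P = 0 := fun j => (hid j).integral_eq.trans hεmean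
  have hvar : ∀ j, variance (ε j) P = 1 := by
    intro j
    rw [(hid j).variance_eq, variance_of_integral_eq_zero (hεmeas 0).aemeasurable hεmean, hεvar]
  have hX : ∀ j, MemLp (fun ω => u (k - j) * ε j ω) 2 P := fun j => (hL2 j).const_mul _
  have hYeq : Y = ∑ j ∈ Finset.range (k + 1), (fun ω => u (k - j) * ε j ω) := by
    ext ω; rw [hY, Finset.sum_apply]
  have hYL : MemLp Y 2 P := by
    rw [hYeq]; exact memLp_finsetSum' _ fun j _ => hX j
  have hYm : ∫ ω, Y ω ∂P = 0 := by
    simp_rw [hY]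
    rw [integral_finsetSum _ fun j _ => (hX j).integrable (by norm_num)]
    refine Finset.sum_eq_zero fun j _ => ?_
    rw [integral_const_mul, hmean, mul_zero]
  refine ⟨hYL, ?_⟩
  rw [← variance_of_integral_eq_zero hYL.aestronglyMeasurable.aemeasurable hYm, hYeq,
    IndepFun.variance_sum (fun j _ => hX j)]
  · have : ∀ j ∈ Finset.range (k + 1), variance (fun ω => u (k - j) * ε j ω) P = u (k - j) ^ 2 := by
      intro j _
      rw [variance_const_mul, hvar, mul_one]
    rw [Finset.sum_congr rfl this]
    exact Finset.sum_range_reflect (fun j => u j ^ 2) (k + 1)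
  · intro i _ j _ hij
    exact (hεindep.indepFun hij).comp (measurable_const_mul (u (k - i)))
      (measurable_const_mul (u (k - j)))

lemma y_solve (b u e y : ℕ → ℝ) (hb0 : b 0 = 0)
    (hU : PowerSeries.mk u * (1 - PowerSeries.mk b) = 1)
    (hy0 : y 0 = e 0)
    (hyrec : ∀ k, 1 ≤ k → y k = e k + ∑ i ∈ Finset.Icc 1 k, b i * y (k - i)) (k : ℕ) :
    y k = ∑ j ∈ Finset.range (k + 1), u (k - j) * e j := by
  have h1 : PowerSeries.mk y = PowerSeries.mk e + PowerSeries.mk b * PowerSeries.mk y := by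
    ext m
    rw [map_add, PowerSeries.coeff_mul, Finset.Nat.sum_antidiagonal_eq_sum_range_succ_mk]
    simp only [PowerSeries.coeff_mk]
    rcases Nat.eq_zero_or_pos m with rfl | hm
    · simp [hb0, hy0]
    · rw [hyrec m hm, Finset.sum_range_succ', hb0, zero_mul, add_zero,
        ← Finset.Ico_add_one_right_eq_Icc,
        Finset.sum_Ico_eq_sum_range]
      simp [add_comm]
  have h2 : PowerSeries.mk y = PowerSeries.mk e * PowerSeries.mk u := by
    linear_combination PowerSeries.mk u * h1 - PowerSeries.mk y * hU
  have h3 := congrArg (PowerSeries.coeff k) h2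
  rw [PowerSeries.coeff_mul, Finset.Nat.sum_antidiagonal_eq_sum_range_succ_mk] at h3
  simp only [PowerSeries.coeff_mk] at h3
  rw [h3]
  exact Finset.sum_congr rfl fun j _ => mul_comm _ _

lemma line_moment {Ω : Type*} [MeasurableSpace Ω] (P : Measure Ω) [IsProbabilityMeasure P]
    (y : ℕ → Ω → ℝ) (B : ℝ) (hy : ∀ k, MemLp (y k) 2 P) (hB : ∀ k, ∫ ω, y k ω ^ 2 ∂P ≤ B)
    (L : ℝ → Ω → ℝ)
    (hL : ∀ x ω, L x ω = (∑ j ∈ Finset.range (⌊x⌋₊ + 1), y j ω) +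
        (x - (⌊x⌋₊ : ℝ)) * y (⌊x⌋₊ + 1) ω)
    (x z : ℝ) (hx : 0 ≤ x) (hxz : x ≤ z) :
    ∫ ω, (L z ω - L x ω) ^ 2 ∂P ≤ (z - x) ^ 2 * B := by
  have hz : 0 ≤ z := hx.trans hxz
  set N := ⌊z⌋₊ + 2 with hN
  have hNx : ⌊x⌋₊ + 2 ≤ N := by
    have := Nat.floor_mono hxz
    omega
  set d : ℕ → ℝ := fun j => min 1 (max 0 (z + 1 - j)) - min 1 (max 0 (x + 1 - j)) with hd
  have hd0 : ∀ j, 0 ≤ d j := by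
    intro j
    simp only [hd, sub_nonneg]
    gcongr
  have hdsum : ∑ j ∈ Finset.range N, d j = z - x := by
    have h1 := interp_sum z hz (fun _ => 1) N le_rfl
    have h2 := interp_sum x hx (fun _ => 1) N hNx
    simp only [hd, Finset.sum_sub_distrib]
    simp at h1 h2
    linarith
  have hdiff : ∀ ω, L z ω - L x ω = ∑ j ∈ Finset.range N, d j * y j ω := by
    intro ω
    rw [hL, hL, interp_sum z hz (fun j => y j ω) N le_rfl,
      interp_sum x hx (fun j => y j ω) N hNx, ← Finset.sum_sub_distrib]
    exact Finset.sum_congr rfl fun j _ => (sub_mul _ _ _).symm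
  have hpt : ∀ ω, (L z ω - L x ω) ^ 2 ≤ (z - x) * ∑ j ∈ Finset.range N, d j * y j ω ^ 2 := by
    intro ω
    rw [hdiff, ← hdsum]
    exact Finset.sum_sq_le_sum_mul_sum_of_sq_le_mul _ (fun j _ => hd0 j)
      (fun j _ => mul_nonneg (hd0 j) (sq_nonneg _)) (fun j _ => le_of_eq (by ring))
  have hi : ∀ j ∈ Finset.range N, Integrable (fun ω => d j * y j ω ^ 2) P := fun j _ =>
    (hy j).integrable_sq.const_mul _
  calc ∫ ω, (L z ω - L x ω) ^ 2 ∂P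
      ≤ ∫ ω, (z - x) * ∑ j ∈ Finset.range N, d j * y j ω ^ 2 ∂P := by
        refine integral_mono_of_nonneg (Eventually.of_forall fun ω => sq_nonneg _)
          ((integrable_finsetSum _ hi).const_mul _) (Eventually.of_forall hpt)
    _ = (z - x) * ∑ j ∈ Finset.range N, d j * ∫ ω, y j ω ^ 2 ∂P := by
        rw [integral_const_mul, integral_finsetSum _ hi]
        simp_rw [integral_const_mul]
    _ ≤ (z - x) * ∑ j ∈ Finset.range N, d j * B := by
        have : 0 ≤ z - x := by linarith
        gcongr with j _
        · exact hd0 j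
        · exact hB j
    _ = _ := by rw [← Finset.sum_mul, hdsum]; ring

/-- Kolmogorov moment bound for the Donsker line, heavy-tail case
`α > 1/2`: `E[|Z^n_t − Z^n_s|²] ≤ c |t−s|²`. -/
theorem donsker_line_kolmogorov_heavy_tail_high
    {Ω : Type*} [MeasurableSpace Ω] (P : Measure Ω) [IsProbabilityMeasure P]
    (φ : ℕ → ℝ) (hφnn : ∀ i, 0 ≤ φ i) (hφ0 : φ 0 = 0) (hφsum : ∑' i : ℕ, φ i = 1)
    (K α : ℝ) (hK : 0 < K) (hα0 : 0 < α) (hα1 : α < 1)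
    (htail : Tendsto (fun N : ℕ => (N : ℝ) ^ α * ∑' i : ℕ, φ (N + i)) atTop (nhds K))
    (δ : ℝ) (hδ : δ = K * Real.Gamma (1 - α) / α)
    (a : ℕ → ℝ) (ha : ∀ n, 1 ≤ n → 0 < a n ∧ a n < 1)
    (lam : ℝ) (hlam : 0 < lam)
    (haconv : Tendsto (fun n : ℕ => (n : ℝ) ^ α * (1 - a n)) atTop (nhds (lam * δ)))
    -- the `ε_k` are iid, square integrable, centered with unit variance
    (ε : ℕ → Ω → ℝ) (hεmeas : ∀ k, Measurable (ε k))
    (hεindep : iIndepFun ε P)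
    (hεid : ∀ k, Measure.map (ε k) P = Measure.map (ε 0) P)
    (hεL2 : MemLp (ε 0) 2 P)
    (hεmean : ∫ ω, ε 0 ω ∂P = 0)
    (hεvar : ∫ ω, (ε 0 ω) ^ 2 ∂P = 1)
    (y : ℕ → ℕ → Ω → ℝ)
    (hy0 : ∀ n, y n 0 = ε 0)
    (hyrec : ∀ n k, 1 ≤ k → ∀ ω,
      y n k ω = ε k ω + ∑ i ∈ Finset.Icc 1 k, a n * φ i * y n (k - i) ω)
    -- the renormalized Donsker line
    (Z : ℕ → ℝ → Ω → ℝ)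
    (hZ : ∀ n t ω, Z n t ω = (1 - a n) / Real.sqrt n *
      ((∑ j ∈ Finset.range (⌊(n : ℝ) * t⌋₊ + 1), y n j ω) +
        ((n : ℝ) * t - (⌊(n : ℝ) * t⌋₊ : ℝ)) * y n (⌊(n : ℝ) * t⌋₊ + 1) ω))
    (hαhalf : 1 / 2 < α) :
    ∃ c > 0, ∀ n, 1 ≤ n → ∀ s ∈ Set.Icc (0:ℝ) 1, ∀ t ∈ Set.Icc (0:ℝ) 1,
      ∫ ω, |Z n t ω - Z n s ω| ^ 2 ∂P ≤ c * |t - s| ^ 2 := by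
  have hsummable : Summable φ := by
    by_contra h
    rw [tsum_eq_zero_of_not_summable h] at hφsum
    exact zero_ne_one hφsum
  have hHS : HasSum φ 1 := hφsum ▸ hsummable.hasSum
  have hδpos : 0 < δ := by
    rw [hδ]
    have := Real.Gamma_pos_of_pos (show 0 < 1 - α by linarith)
    positivity
  obtain ⟨c, hc, d, hd, hw⟩ := window_bound φ hφnn hHS K α hK hα1 hαhalf htail
  obtain ⟨c2, hc2⟩ := haconv.bddAbove_range
  obtain ⟨c3, hc3⟩ := (haconv.inv₀ (by positivity)).bddAbove_range
  have hup : ∀ n : ℕ, 1 ≤ n → 1 - a n ≤ c2 / (n:ℝ) ^ α := by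
    intro n hn
    have hn0 : (0:ℝ) < n := by exact_mod_cast hn
    have : (n:ℝ) ^ α * (1 - a n) ≤ c2 := hc2 ⟨n, rfl⟩
    rw [le_div_iff₀ (by positivity)]
    linarith
  have hlow : ∀ n : ℕ, 1 ≤ n → 1 / (1 - a n) ≤ c3 * (n:ℝ) ^ α := by
    intro n hn
    have hn0 : (0:ℝ) < n := by exact_mod_cast hn
    have hp : 0 < (n:ℝ) ^ α := by positivity
    have h1 : 0 < 1 - a n := by linarith [(ha n hn).2]
    have : ((n:ℝ) ^ α * (1 - a n))⁻¹ ≤ c3 := hc3 ⟨n, rfl⟩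
    calc 1 / (1 - a n) = ((n:ℝ) ^ α * (1 - a n))⁻¹ * (n:ℝ) ^ α := by field_simp
      _ ≤ _ := by gcongr
  -- the constants
  set C1 : ℝ := 2 / d * (c3 ^ 2 + (2 / c ^ 2 * (1 / (2 * α - 1)) + 2 * d)) with hC1
  set C2 : ℝ := c3 ^ 2 / d with hC2
  set Cb : ℝ := C1 + C2 with hCb
  have h2α : 0 < 2 * α - 1 := by linarith
  have hC1p : 0 < C1 := by positivity
  have hC2p : 0 ≤ C2 := by positivity
  refine ⟨c2 ^ 2 * Cb + 1, by positivity, ?_⟩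
  intro n hn
  have hn0 : (0:ℝ) < n := by exact_mod_cast hn
  have hn1 : (1:ℝ) ≤ n := by exact_mod_cast hn
  set p : ℝ := (n:ℝ) ^ α with hp
  have hppos : 0 < p := by positivity
  obtain ⟨ha0, ha1⟩ := ha n hn
  have h1a : 0 < 1 - a n := by linarith
  have hb : ∀ k, 0 ≤ a n * φ k := fun k => mul_nonneg ha0.le (hφnn k)
  obtain ⟨u, hu, hrec, hU⟩ := exists_renewal (fun k => a n * φ k) hb (by simp [hφ0])
  have hpow : (n:ℝ) ^ (2 * α - 1) = p ^ 2 / n := by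
    rw [Real.rpow_sub hn0, Real.rpow_one, hp, ← Real.rpow_natCast, ← Real.rpow_mul hn0.le]
    congr 2; push_cast; ring
  have hpow1 : 1 ≤ p ^ 2 / n := by
    rw [← hpow]; exact Real.one_le_rpow hn1 h2α.le
  have hsq : (1 / (1 - a n)) ^ 2 ≤ c3 ^ 2 * p ^ 2 := by
    rw [← mul_pow]
    have := hlow n hn
    gcongr
  have hsum : ∀ M, ∑ k ∈ Finset.range M, u k ^ 2 ≤ Cb * (p ^ 2 / n) := by
    intro M
    rcases le_total (1 / (n:ℝ)) d with hnd | hnd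
    · have h := sum_sq_bound φ u (a n) hφnn hHS ha0.le ha1 hu hrec α c d hαhalf hc hd
        (fun θ h0 h1 => hw θ h0 h1 (a n) ha0.le ha1.le) (1 / n) (by positivity) hnd M
      have hη : (1 / (n:ℝ)) ^ (1 - 2 * α) = p ^ 2 / n := by
        rw [one_div, Real.inv_rpow hn0.le, ← Real.rpow_neg hn0.le, neg_sub, hpow]
      rw [hη] at h
      refine h.trans ?_
      have e1 : 1 / (n:ℝ) * (1 / (1 - a n)) ^ 2 ≤ c3 ^ 2 * (p ^ 2 / n) := by
        calc 1 / (n:ℝ) * (1 / (1 - a n)) ^ 2 ≤ 1 / (n:ℝ) * (c3 ^ 2 * p ^ 2) := by gcongr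
          _ = _ := by ring
      have e2 : 2 * d ≤ 2 * d * (p ^ 2 / n) := le_mul_of_one_le_right (by positivity) hpow1
      calc _ ≤ 2 / d * (c3 ^ 2 * (p ^ 2 / n) +
            (2 / c ^ 2 * (p ^ 2 / n / (2 * α - 1)) + 2 * d * (p ^ 2 / n))) := by gcongr
        _ = C1 * (p ^ 2 / n) := by rw [hC1]; ring
        _ ≤ Cb * (p ^ 2 / n) := by
            gcongr; linarith
    · have hpart := renewal_partial (fun k => a n * φ k) u hb hu hrec (a n) ha1
        (by simpa using hHS.mul_left (a n)) M
      have h0 : 0 ≤ ∑ k ∈ Finset.range M, u k := Finset.sum_nonneg fun k _ => hu k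
      have h1 : 1 ≤ 1 / d / n := by
        rw [div_div, le_div_iff₀ (by positivity), one_mul]
        rw [le_div_iff₀ hn0] at hnd
        exact hnd
      calc ∑ k ∈ Finset.range M, u k ^ 2 ≤ (∑ k ∈ Finset.range M, u k) ^ 2 :=
            Finset.sum_sq_le_sq_sum_of_nonneg fun k _ => hu k
        _ ≤ (1 / (1 - a n)) ^ 2 := by gcongr
        _ ≤ c3 ^ 2 * p ^ 2 := hsq
        _ ≤ c3 ^ 2 * p ^ 2 * (1 / d / n) := le_mul_of_one_le_right (by positivity) h1
        _ = C2 * (p ^ 2 / n) := by rw [hC2]; ring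
        _ ≤ Cb * (p ^ 2 / n) := by gcongr; linarith
  have hym : ∀ k, MemLp (y n k) 2 P ∧ ∫ ω, y n k ω ^ 2 ∂P =
      ∑ j ∈ Finset.range (k + 1), u j ^ 2 := by
    intro k
    refine y_moment P ε hεmeas hεindep hεid hεL2 hεmean hεvar u k (y n k) fun ω => ?_
    exact y_solve (fun k => a n * φ k) u (fun j => ε j ω) (fun j => y n j ω) (by simp [hφ0]) hU
      (by simp [hy0]) (fun k hk => hyrec n k hk ω) k
  have key : ∀ s t : ℝ, 0 ≤ s → s ≤ t →
      ∫ ω, |Z n t ω - Z n s ω| ^ 2 ∂P ≤ (c2 ^ 2 * Cb + 1) * |t - s| ^ 2 := by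
    intro s t hs hst
    have hline := line_moment P (y n) (Cb * (p ^ 2 / n)) (fun k => (hym k).1)
      (fun k => (hym k).2.trans_le (hsum _))
      (fun x ω => (∑ j ∈ Finset.range (⌊x⌋₊ + 1), y n j ω) +
        (x - (⌊x⌋₊ : ℝ)) * y n (⌊x⌋₊ + 1) ω) (fun _ _ => rfl) (n * s) (n * t)
      (by positivity) (by gcongr)
    simp_rw [hZ, sq_abs, ← mul_sub, mul_pow]
    rw [integral_const_mul]
    have hpre : ((1 - a n) / Real.sqrt n) ^ 2 ≤ c2 ^ 2 / p ^ 2 / n := by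
      rw [div_pow, Real.sq_sqrt hn0.le, ← div_pow]
      have := hup n hn
      gcongr
    calc _ ≤ (c2 ^ 2 / p ^ 2 / n) * ((n * t - n * s) ^ 2 * (Cb * (p ^ 2 / n))) := by gcongr
      _ = c2 ^ 2 * Cb * (t - s) ^ 2 := by field_simp
      _ ≤ _ := by gcongr; linarith
  intro s hs t ht
  rcases le_total s t with h | h
  · exact key s t hs.1 h
  · have := key t s ht.1 h
    simp_rw [abs_sub_comm (Z n t _), abs_sub_comm t s]
    exact this
end

section
/- (One-dimensional marginal convergence in the light-tail case.) Let φ : ℕ → ℝ with φ_i ≥ 0, φ_0 = 0, ∑_{i=1}^∞ φ_i = 1, and assume m := ∑_{i=1}^∞ i φ_i < ∞. Let (a_n)_{n≥1} satisfy 0 < a_n < 1 and n(1−a_n) → λ for some λ > 0. Let (ε_k)_{k≥0} be iid real random variables with E[ε_0] = 0 and E[ε_0²] = 1, define y^n_0 = ε_0, y^n_k = ε_k + ∑_{i=1}^k a_n φ_i y^n_{k−i} for k ≥ 1, and set Z^n_t = ((1−a_n)/√n)(∑_{j=0}^{⌊nt⌋} y^n_j + (nt−⌊nt⌋) y^n_{⌊nt⌋+1}).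 Then for each fixed t ∈ [0,1], Z^n_t converges in distribution, as n → ∞, to a centered Gaussian random variable with variance ∫_0^t (1 − e^{−(λ/m)(t−s)})² ds. -/
open MeasureTheory ProbabilityTheory Filter Set

/-- The resolvent sequence. -/
noncomputable def psiA (a : ℝ) (φ : ℕ → ℝ) : ℕ → ℝ
  | 0 => 1
  | (k + 1) => ∑ i : Fin (k + 1), a * φ (i + 1) * psiA a φ (k - i)
decreasing_by omega

lemma psiA_zero (a : ℝ) (φ : ℕ → ℝ) : psiA a φ 0 = 1 := by rw [psiA]

lemma psiA_succ (a : ℝ) (φ : ℕ → ℝ) (k : ℕ) :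
    psiA a φ (k + 1) = ∑ i ∈ Finset.range (k + 1), a * φ (i + 1) * psiA a φ (k - i) := by
  rw [psiA, Finset.sum_range]

/-- partial sums -/
noncomputable def SA (a : ℝ) (φ : ℕ → ℝ) (k : ℕ) : ℝ := ∑ i ∈ Finset.range (k + 1), psiA a φ i

lemma SA_succ (a : ℝ) (φ : ℕ → ℝ) (k : ℕ) : SA a φ (k + 1) = SA a φ k + psiA a φ (k + 1) := by
  unfold SA; rw [Finset.sum_range_succ]

lemma SA_zero (a : ℝ) (φ : ℕ → ℝ) : SA a φ 0 = 1 := by simp [SA, psiA_zero]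

lemma SA_rec (a : ℝ) (φ : ℕ → ℝ) (k : ℕ) :
    SA a φ k = 1 + a * ∑ i ∈ Finset.range k, φ (i + 1) * SA a φ (k - 1 - i) := by
  induction k with
  | zero => simp [SA_zero]
  | succ k ih =>
    rw [SA_succ, ih, psiA_succ, Finset.sum_range_succ, Finset.sum_range_succ, add_assoc]
    congr 1
    simp only [Nat.add_sub_cancel, Nat.sub_self, psiA_zero, SA_zero]
    rw [mul_add, ← add_assoc]
    congr 1
    · rw [Finset.mul_sum, Finset.mul_sum, ← Finset.sum_add_distrib]
      refine Finset.sum_congr rfl fun i hi => ?_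
      have hi' : i < k := Finset.mem_range.mp hi
      obtain ⟨j, rfl⟩ : ∃ j, k = i + 1 + j := ⟨k - (i + 1), by omega⟩
      rw [show i + 1 + j - 1 - i = j by omega, show i + 1 + j - i = j + 1 by omega, SA_succ]
      ring
    · ring

lemma partial_le_one (φ : ℕ → ℝ) (hφnn : ∀ i, 0 ≤ φ i) (hφs : HasSum φ 1) (N : ℕ) :
    ∑ l ∈ Finset.range N, φ l ≤ 1 :=
  sum_le_hasSum _ (fun i _ => hφnn i) hφs

lemma partial_shift_le_one (φ : ℕ → ℝ) (hφnn : ∀ i, 0 ≤ φ i) (hφs : HasSum φ 1) (N : ℕ) :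
    ∑ l ∈ Finset.range N, φ (l + 1) ≤ 1 := by
  have h := partial_le_one φ hφnn hφs (N + 1)
  rw [Finset.sum_range_succ'] at h
  linarith [hφnn 0]

lemma psiA_bounds (a : ℝ) (ha : 0 < a ∧ a < 1) (φ : ℕ → ℝ) (hφnn : ∀ i, 0 ≤ φ i)
    (hφs : HasSum φ 1) (k : ℕ) : 0 ≤ psiA a φ k ∧ psiA a φ k ≤ 1 := by
  induction k using Nat.strong_induction_on with
  | _ k ih =>
    cases k with
    | zero => simp [psiA_zero]
    | succ k =>
      rw [psiA_succ]
      constructor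
      · refine Finset.sum_nonneg fun i hi => ?_
        exact mul_nonneg (mul_nonneg ha.1.le (hφnn _)) (ih _ (by omega)).1
      · calc _ ≤ ∑ i ∈ Finset.range (k + 1), φ (i + 1) := by
              refine Finset.sum_le_sum fun i hi => ?_
              have h1 := ih (k - i) (by omega)
              have h2 := hφnn (i + 1)
              have h3 : a * φ (i + 1) ≤ φ (i + 1) := by nlinarith [ha.2]
              have h4 : 0 ≤ a * φ (i + 1) := mul_nonneg ha.1.le h2
              nlinarith [h1.1, h1.2]
          _ ≤ 1 := partial_shift_le_one φ hφnn hφs _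

/-- normalised partial sums -/
noncomputable def bA (a : ℝ) (φ : ℕ → ℝ) (k : ℕ) : ℝ := (1 - a) * SA a φ k

lemma bA_rec (a : ℝ) (φ : ℕ → ℝ) (k : ℕ) :
    bA a φ k = (1 - a) + a * ∑ i ∈ Finset.range k, φ (i + 1) * bA a φ (k - 1 - i) := by
  unfold bA
  rw [SA_rec, mul_add, mul_one, Finset.mul_sum, Finset.mul_sum, Finset.mul_sum]
  congr 1
  exact Finset.sum_congr rfl fun i _ => by ring

lemma bA_succ (a : ℝ) (φ : ℕ → ℝ) (k : ℕ) :
    bA a φ (k + 1) = bA a φ k + (1 - a) * psiA a φ (k + 1) := by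
  unfold bA; rw [SA_succ]; ring

lemma bA_bounds (a : ℝ) (ha : 0 < a ∧ a < 1) (φ : ℕ → ℝ) (hφnn : ∀ i, 0 ≤ φ i)
    (hφs : HasSum φ 1) (k : ℕ) : 0 ≤ bA a φ k ∧ bA a φ k ≤ 1 := by
  induction k using Nat.strong_induction_on with
  | _ k ih =>
    rw [bA_rec]
    have h0 : 0 ≤ ∑ i ∈ Finset.range k, φ (i + 1) * bA a φ (k - 1 - i) := by
      refine Finset.sum_nonneg fun i hi => ?_
      have : i < k := Finset.mem_range.mp hi
      exact mul_nonneg (hφnn _) (ih _ (by omega)).1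
    have h1 : ∑ i ∈ Finset.range k, φ (i + 1) * bA a φ (k - 1 - i) ≤ 1 := by
      calc _ ≤ ∑ i ∈ Finset.range k, φ (i + 1) := by
            refine Finset.sum_le_sum fun i hi => ?_
            have : i < k := Finset.mem_range.mp hi
            exact mul_le_of_le_one_right (hφnn _) (ih _ (by omega)).2
        _ ≤ 1 := partial_shift_le_one φ hφnn hφs _
    constructor <;> nlinarith [ha.1, ha.2]

lemma bA_lip (a : ℝ) (ha : 0 < a ∧ a < 1) (φ : ℕ → ℝ) (hφnn : ∀ i, 0 ≤ φ i)
    (hφs : HasSum φ 1) (k i : ℕ) :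
    0 ≤ bA a φ (k + i) - bA a φ k ∧ bA a φ (k + i) - bA a φ k ≤ i * (1 - a) := by
  induction i with
  | zero => simp
  | succ i ih =>
    rw [← add_assoc, bA_succ]
    have := psiA_bounds a ha φ hφnn hφs (k + i + 1)
    push_cast
    constructor <;> nlinarith [ha.2]

/-- tail sums -/
noncomputable def tauA (φ : ℕ → ℝ) (N : ℕ) : ℝ := 1 - ∑ l ∈ Finset.range N, φ l

lemma tauA_succ (φ : ℕ → ℝ) (N : ℕ) : tauA φ (N + 1) = tauA φ N - φ N := by
  unfold tauA; rw [Finset.sum_range_succ]; ring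

lemma tauA_nonneg (φ : ℕ → ℝ) (hφnn : ∀ i, 0 ≤ φ i) (hφs : HasSum φ 1) (N : ℕ) :
    0 ≤ tauA φ N := by
  unfold tauA; linarith [partial_le_one φ hφnn hφs N]

lemma tauA_hasSum (φ : ℕ → ℝ) (hφnn : ∀ i, 0 ≤ φ i) (hφs : HasSum φ 1)
    (m : ℝ) (hm : HasSum (fun i : ℕ => (i : ℝ) * φ i) m) :
    HasSum (fun i => tauA φ (i + 1)) m := by
  rw [hasSum_iff_tendsto_nat_of_nonneg (fun i => tauA_nonneg φ hφnn hφs _)]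
  have h1 : ∀ N, ∑ i ∈ Finset.range N, tauA φ (i + 1) =
      ∑ l ∈ Finset.range N, (l : ℝ) * φ l + N * tauA φ N := by
    intro N
    induction N with
    | zero => simp
    | succ N ih =>
      rw [Finset.sum_range_succ, ih, Finset.sum_range_succ, tauA_succ]
      push_cast; ring
  have h2 : ∀ N, N * tauA φ N ≤ m - ∑ l ∈ Finset.range N, (l : ℝ) * φ l := by
    intro N
    have e1 : HasSum (fun i => φ (i + N)) (tauA φ N) := by
      unfold tauA
      exact (hasSum_nat_add_iff' N).mpr hφs
    have e2 := (hasSum_nat_add_iff' N).mpr hm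
    refine hasSum_le (fun i => ?_) (e1.mul_left (N : ℝ)) e2
    refine mul_le_mul_of_nonneg_right ?_ (hφnn _)
    push_cast; linarith [(Nat.cast_nonneg i : (0:ℝ) ≤ i)]
  have h3 := hm.tendsto_sum_nat
  simp_rw [h1]
  refine tendsto_of_tendsto_of_tendsto_of_le_of_le h3 tendsto_const_nhds (fun N => ?_) (fun N => ?_)
  · have := tauA_nonneg φ hφnn hφs N
    have : 0 ≤ N * tauA φ N := by positivity
    simp only; linarith
  · simp only; linarith [h2 N]

lemma bA_identity (a : ℝ) (φ : ℕ → ℝ) (hφ0 : φ 0 = 0) (J : ℕ) :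
    (1 - a) * ∑ j ∈ Finset.range (J + 1), (1 - bA a φ j) =
      a * ∑ i ∈ Finset.range (J + 1), tauA φ (i + 1) * bA a φ (J - i) := by
  have key : ∀ J, (1 - a) * (1 - bA a φ J) = a * (bA a φ J -
      ∑ i ∈ Finset.range J, φ (i + 1) * bA a φ (J - 1 - i)) := by
    intro J
    have := bA_rec a φ J
    linear_combination (-1) * this
  have t1 : tauA φ 1 = 1 := by simp [tauA, hφ0]
  induction J with
  | zero =>
    have := key 0
    simp [t1] at this ⊢
    linarith
  | succ J ih =>
    rw [Finset.sum_range_succ, mul_add, ih, key, Finset.sum_range_succ' _ (J + 1), ← mul_add]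
    congr 1
    simp only [zero_add, t1, one_mul, Nat.sub_zero, Nat.add_sub_cancel]
    rw [show ∑ i ∈ Finset.range (J + 1), tauA φ (i + 1 + 1) * bA a φ (J + 1 - (i + 1)) =
      ∑ i ∈ Finset.range (J + 1), (tauA φ (i + 1) * bA a φ (J - i) - φ (i + 1) * bA a φ (J - i)) from
      Finset.sum_congr rfl fun i _ => by
        rw [tauA_succ φ (i + 1), show J + 1 - (i + 1) = J - i by omega]; ring]
    rw [Finset.sum_sub_distrib]
    ring

/-- error -/
noncomputable def deltaA (φ : ℕ → ℝ) (a : ℝ) : ℝ :=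
  ∑' i : ℕ, tauA φ (i + 1) * min 1 ((i + 1) * (1 - a))

lemma bA_error (a : ℝ) (ha : 0 < a ∧ a < 1) (φ : ℕ → ℝ) (hφnn : ∀ i, 0 ≤ φ i)
    (hφs : HasSum φ 1) (m : ℝ) (hm : HasSum (fun i : ℕ => (i : ℝ) * φ i) m) (J : ℕ) :
    0 ≤ m * bA a φ J - ∑ i ∈ Finset.range (J + 1), tauA φ (i + 1) * bA a φ (J - i) ∧
    m * bA a φ J - ∑ i ∈ Finset.range (J + 1), tauA φ (i + 1) * bA a φ (J - i) ≤ deltaA φ a := by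
  have hτ := tauA_hasSum φ hφnn hφs m hm
  have hb := bA_bounds a ha φ hφnn hφs
  have hτ0 := tauA_nonneg φ hφnn hφs
  have h1 : HasSum (fun i => tauA φ (i + 1) * if i ≤ J then bA a φ (J - i) else 0)
      (∑ i ∈ Finset.range (J + 1), tauA φ (i + 1) * bA a φ (J - i)) := by
    have := hasSum_sum_of_ne_finset_zero (s := Finset.range (J + 1))
      (f := fun i => tauA φ (i + 1) * if i ≤ J then bA a φ (J - i) else 0) (L := .unconditional _) (by
        intro i hi
        rw [Finset.mem_range] at hi
        rw [if_neg (by omega), mul_zero])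
    convert this using 1
    refine Finset.sum_congr rfl fun i hi => ?_
    rw [Finset.mem_range] at hi
    rw [if_pos (by omega)]
  have h2 := (hτ.mul_right (bA a φ J)).sub h1
  have hmin : ∀ i : ℕ, 0 ≤ min 1 (((i : ℝ) + 1) * (1 - a)) := fun i =>
    le_min zero_le_one (mul_nonneg (by positivity) (by linarith [ha.2]))
  have h3 : HasSum (fun i : ℕ => tauA φ (i + 1) * min 1 ((i + 1) * (1 - a))) (deltaA φ a) := by
    apply Summable.hasSum
    refine Summable.of_nonneg_of_le (fun i => mul_nonneg (hτ0 _) (hmin i)) (fun i => ?_) hτ.summable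
    exact mul_le_of_le_one_right (hτ0 _) (min_le_left _ _)
  have hd : ∀ i, 0 ≤ bA a φ J - (if i ≤ J then bA a φ (J - i) else 0) ∧
      bA a φ J - (if i ≤ J then bA a φ (J - i) else 0) ≤ min 1 ((i + 1) * (1 - a)) := by
    intro i
    split_ifs with h
    · have := bA_lip a ha φ hφnn hφs (J - i) i
      rw [Nat.sub_add_cancel h] at this
      refine ⟨this.1, le_min ?_ ?_⟩
      · linarith [(hb J).2, (hb (J - i)).1]
      · linarith [ha.2]
    · have := bA_lip a ha φ hφnn hφs 0 J
      rw [zero_add] at this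
      have h0 : bA a φ 0 = 1 - a := by simp [bA, SA_zero]
      have hJ : (J : ℝ) ≤ i := by exact_mod_cast (by omega : J ≤ i)
      refine ⟨by linarith [(hb J).1], le_min (by linarith [(hb J).2]) ?_⟩
      have : (J : ℝ) * (1 - a) ≤ i * (1 - a) := mul_le_mul_of_nonneg_right hJ (by linarith [ha.2])
      linarith
  constructor
  · refine h2.nonneg fun i => ?_
    rw [← mul_sub]
    exact mul_nonneg (hτ0 _) (hd i).1
  · refine hasSum_le (fun i => ?_) h2 h3
    rw [← mul_sub]
    exact mul_le_mul_of_nonneg_left (hd i).2 (hτ0 _)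

lemma deltaA_tendsto (φ : ℕ → ℝ) (hφnn : ∀ i, 0 ≤ φ i) (hφs : HasSum φ 1)
    (m : ℝ) (hm : HasSum (fun i : ℕ => (i : ℝ) * φ i) m)
    (a : ℕ → ℝ) (ha : ∀ n, 1 ≤ n → 0 < a n ∧ a n < 1) (h : Tendsto a atTop (nhds 1)) :
    Tendsto (fun n => deltaA φ (a n)) atTop (nhds 0) := by
  have hτ := tauA_hasSum φ hφnn hφs m hm
  have hτ0 := tauA_nonneg φ hφnn hφs
  have := tendsto_tsum_of_dominated_convergence (𝓕 := atTop)
    (f := fun n (i : ℕ) => tauA φ (i + 1) * min 1 (((i : ℝ) + 1) * (1 - a n)))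
    (g := fun _ => (0 : ℝ)) hτ.summable ?_ ?_
  · simpa [deltaA] using this
  · intro k
    have : Tendsto (fun n => tauA φ (k + 1) * min 1 (((k : ℝ) + 1) * (1 - a n))) atTop
        (nhds (tauA φ (k + 1) * min 1 (((k : ℝ) + 1) * (1 - 1)))) :=
      ((tendsto_const_nhds.min ((tendsto_const_nhds.sub h).const_mul _)).const_mul _)
    simpa using this
  · filter_upwards [eventually_ge_atTop 1] with n hn i
    have hmin : 0 ≤ min 1 (((i : ℝ) + 1) * (1 - a n)) :=
      le_min zero_le_one (mul_nonneg (by positivity) (by linarith [(ha n hn).2]))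
    rw [Real.norm_of_nonneg (mul_nonneg (hτ0 _) hmin)]
    exact mul_le_of_le_one_right (hτ0 _) (min_le_left _ _)

/-- discrete ODE estimate -/
lemma bA_approx (a : ℝ) (ha : 0 < a ∧ a < 1) (φ : ℕ → ℝ) (hφnn : ∀ i, 0 ≤ φ i) (hφ0 : φ 0 = 0)
    (hφs : HasSum φ 1) (m : ℝ) (hm0 : 0 < m) (hm : HasSum (fun i : ℕ => (i : ℝ) * φ i) m)
    (J : ℕ) :
    |bA a φ J - (1 - ((1 + (1 - a) / (a * m)) ^ (J + 1))⁻¹)| ≤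
      ((J + 1) * ((1 - a) / (a * m)) + 1) * (deltaA φ a / m) := by
  set κ := (1 - a) / (a * m) with hκ
  set δ := deltaA φ a / m with hδ
  have hκ0 : 0 < κ := div_pos (by linarith [ha.2]) (mul_pos ha.1 hm0)
  have hne : 1 + κ ≠ 0 := by positivity
  set T : ℕ → ℝ := fun J => ∑ j ∈ Finset.range J, (1 - bA a φ j) with hT
  have hE : ∀ J, ∃ e, 0 ≤ e ∧ e ≤ δ ∧ κ * T (J + 1) = bA a φ J - e := by
    intro J
    have h1 := bA_error a ha φ hφnn hφs m hm J
    have h2 := bA_identity a φ hφ0 J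
    refine ⟨(m * bA a φ J - ∑ i ∈ Finset.range (J + 1), tauA φ (i + 1) * bA a φ (J - i)) / m,
      div_nonneg h1.1 hm0.le, by rw [hδ]; gcongr; exact h1.2, ?_⟩
    have ha0 := ha.1.ne'
    have hm1 := hm0.ne'
    rw [hκ, div_mul_eq_mul_div, h2]
    field_simp
    ring
  have hδ0 : 0 ≤ δ := by obtain ⟨e, h1, h2, _⟩ := hE 0; linarith
  have hv : ∀ J : ℕ, |1 - κ * T J - ((1 + κ) ^ J)⁻¹| ≤ J * κ * δ := by
    intro J
    induction J with
    | zero => simp [hT]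
    | succ J ih =>
      obtain ⟨e, he0, he1, he⟩ := hE J
      have hTs : T (J + 1) = T J + (1 - bA a φ J) := by simp only [hT]; rw [Finset.sum_range_succ]
      set v := 1 - κ * T J - ((1 + κ) ^ J)⁻¹ with hv
      have h1 : 1 - κ * T (J + 1) - ((1 + κ) ^ (J + 1))⁻¹ = (v + κ * e) / (1 + κ) := by
        rw [eq_div_iff hne, hv, pow_succ, mul_inv, sub_mul, mul_assoc _ (1 + κ)⁻¹, inv_mul_cancel₀ hne]
        linear_combination (-κ) * hTs - κ * he
      rw [h1, abs_div, abs_of_pos (by positivity : 0 < 1 + κ)]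
      calc _ ≤ |v + κ * e| := div_le_self (abs_nonneg _) (by linarith)
        _ ≤ |v| + |κ * e| := abs_add_le _ _
        _ ≤ J * κ * δ + κ * δ := by
            rw [abs_of_nonneg (by positivity : 0 ≤ κ * e)]
            gcongr
        _ = _ := by push_cast; ring
  obtain ⟨e, he0, he1, he⟩ := hE J
  have h3 := hv (J + 1)
  have : bA a φ J - (1 - ((1 + κ) ^ (J + 1))⁻¹) =
    -(1 - κ * T (J + 1) - ((1 + κ) ^ (J + 1))⁻¹) + e := by linarith
  rw [this]
  calc _ ≤ _ := abs_add_le _ _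
    _ ≤ ((J + 1 : ℕ) : ℝ) * κ * δ + δ := by
        rw [abs_neg, abs_of_nonneg he0]
        linarith
    _ = _ := by push_cast; ring

lemma abs_exp_neg_sub_le {x y : ℝ} (hx : 0 ≤ x) (hy : 0 ≤ y) :
    |Real.exp (-x) - Real.exp (-y)| ≤ |x - y| := by
  have key : ∀ u v : ℝ, 0 ≤ u → u ≤ v → Real.exp (-u) - Real.exp (-v) ≤ v - u := by
    intro u v hu huv
    have h1 : Real.exp (-v) = Real.exp (-u) * Real.exp (-(v - u)) := by
      rw [← Real.exp_add]; congr 1; ring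
    have h2 := Real.add_one_le_exp (-(v - u))
    have h3 : Real.exp (-u) ≤ 1 := Real.exp_le_one_iff.mpr (by linarith)
    have h4 := Real.exp_pos (-u)
    rw [h1]
    nlinarith
  rcases le_total x y with h | h
  · rw [abs_of_nonneg (by linarith [Real.exp_le_exp.mpr (neg_le_neg h)]), abs_sub_comm,
      abs_of_nonneg (by linarith)]
    exact key x y hx h
  · rw [abs_sub_comm, abs_of_nonneg (by linarith [Real.exp_le_exp.mpr (neg_le_neg h)]),
      abs_of_nonneg (by linarith)]
    exact key y x hy h

lemma bA_uniform (φ : ℕ → ℝ) (hφnn : ∀ i, 0 ≤ φ i) (hφ0 : φ 0 = 0)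
    (hφs : HasSum φ 1) (m : ℝ) (hm0 : 0 < m) (hm : HasSum (fun i : ℕ => (i : ℝ) * φ i) m)
    (a : ℕ → ℝ) (ha : ∀ n, 1 ≤ n → 0 < a n ∧ a n < 1)
    (lam : ℝ) (hlam : 0 < lam)
    (haconv : Tendsto (fun n : ℕ => (n : ℝ) * (1 - a n)) atTop (nhds lam))
    (ha1 : Tendsto a atTop (nhds 1)) :
    ∃ η : ℕ → ℝ, Tendsto η atTop (nhds 0) ∧ ∀ n, 1 ≤ n → ∀ j : ℕ, j ≤ n + 1 →
      |bA (a n) φ j - (1 - Real.exp (-((lam / m) * (j / n))))| ≤ η n := by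
  set κ : ℕ → ℝ := fun n => (1 - a n) / (a n * m) with hκ
  have hδ := deltaA_tendsto φ hφnn hφs m hm a ha ha1
  have hnκ : Tendsto (fun n : ℕ => (n : ℝ) * κ n) atTop (nhds (lam / m)) := by
    have : Tendsto (fun n : ℕ => (n : ℝ) * (1 - a n) / (a n * m)) atTop (nhds (lam / (1 * m))) :=
      haconv.div (ha1.mul_const m) (by simpa using hm0.ne')
    rw [one_mul] at this
    refine this.congr fun n => ?_
    simp only [hκ]; rw [mul_div_assoc]
  have hκ0 : Tendsto κ atTop (nhds 0) := by
    have : Tendsto (fun n : ℕ => (1 - a n) / (a n * m)) atTop (nhds ((1 - 1) / (1 * m))) :=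
      (tendsto_const_nhds.sub ha1).div (ha1.mul_const m) (by simpa using hm0.ne')
    simpa using this
  have hnl := Real.tendsto_nat_mul_log_one_add_of_tendsto hnκ
  have hl : Tendsto (fun n => Real.log (1 + κ n)) atTop (nhds 0) := by
    have : Tendsto (fun n => Real.log (1 + κ n)) atTop (nhds (Real.log (1 + 0))) :=
      (tendsto_const_nhds.add hκ0).log (by simp)
    simpa using this
  refine ⟨fun n => (n * κ n + 2 * κ n + 1) * (deltaA φ (a n) / m) +
    (2 * |n * Real.log (1 + κ n) - lam / m| + Real.log (1 + κ n)), ?_, ?_⟩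
  · have h1 := ((hnκ.add (hκ0.const_mul 2)).add_const 1).mul (hδ.div_const m)
    have h2 := (((hnl.sub_const (lam / m)).abs).const_mul 2).add hl
    simpa using h1.add h2
  · intro n hn j hj
    have hb := bA_approx (a n) (ha n hn) φ hφnn hφ0 hφs m hm0 hm j
    change |bA (a n) φ j - (1 - ((1 + κ n) ^ (j + 1))⁻¹)| ≤
      ((j + 1) * κ n + 1) * (deltaA φ (a n) / m) at hb
    have hκp : 0 < κ n := div_pos (by linarith [(ha n hn).2]) (mul_pos (ha n hn).1 hm0)
    have hδ0 : 0 ≤ deltaA φ (a n) / m := by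
      have := bA_error (a n) (ha n hn) φ hφnn hφs m hm 0
      exact div_nonneg (this.1.trans this.2) hm0.le
    have hjn : (j : ℝ) ≤ n + 1 := by exact_mod_cast hj
    have hn0 : (0 : ℝ) < n := by exact_mod_cast hn
    have hn1 : (1 : ℝ) ≤ n := by exact_mod_cast hn
    have hlp : 0 ≤ Real.log (1 + κ n) := Real.log_nonneg (by linarith)
    have e1 : ((1 + κ n) ^ (j + 1))⁻¹ = Real.exp (-((j + 1) * Real.log (1 + κ n))) := by
      rw [Real.exp_neg]
      congr 1
      rw [← Nat.cast_succ, Real.exp_nat_mul, Real.exp_log (by linarith)]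
    have e2 : |((j : ℝ) + 1) * Real.log (1 + κ n) - (lam / m) * (j / n)| ≤
        2 * |n * Real.log (1 + κ n) - lam / m| + Real.log (1 + κ n) := by
      have : ((j : ℝ) + 1) * Real.log (1 + κ n) - (lam / m) * (j / n) =
        (j / n) * (n * Real.log (1 + κ n) - lam / m) + Real.log (1 + κ n) := by
        field_simp
        ring
      rw [this]
      refine (abs_add_le _ _).trans ?_
      rw [abs_mul, abs_of_nonneg hlp, abs_of_nonneg (by positivity : (0:ℝ) ≤ j / n)]
      have : (j : ℝ) / n ≤ 2 := by rw [div_le_iff₀ hn0]; linarith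
      gcongr
    have e3 := abs_exp_neg_sub_le (x := ((j : ℝ) + 1) * Real.log (1 + κ n))
      (y := (lam / m) * (j / n)) (by positivity) (by positivity)
    rw [e1] at hb
    have e4 : ((j + 1) * κ n + 1) * (deltaA φ (a n) / m) ≤
      (n * κ n + 2 * κ n + 1) * (deltaA φ (a n) / m) := by
      refine mul_le_mul_of_nonneg_right ?_ hδ0
      nlinarith
    have e5 := abs_sub_abs_le_abs_sub (bA (a n) φ j - (1 - Real.exp (-((lam / m) * (j / n)))))
      (bA (a n) φ j - (1 - Real.exp (-((j + 1) * Real.log (1 + κ n)))))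
    rw [show bA (a n) φ j - (1 - Real.exp (-((lam / m) * (j / n)))) - (bA (a n) φ j -
      (1 - Real.exp (-((j + 1) * Real.log (1 + κ n))))) =
      -(Real.exp (-((j + 1) * Real.log (1 + κ n))) - Real.exp (-((lam / m) * (j / n)))) by ring,
      abs_neg] at e5
    simp only
    linarith

lemma riemann_lim (c : ℝ) (hc : 0 < c) (t : ℝ) (ht : t ∈ Set.Icc (0:ℝ) 1)
    (g : ℕ → ℕ → ℝ) (η : ℕ → ℝ) (hη : Tendsto η atTop (nhds 0))
    (hg : ∀ n, 1 ≤ n → ∀ j : ℕ, 0 ≤ g n j ∧ g n j ≤ 1)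
    (hgF : ∀ n, 1 ≤ n → ∀ j : ℕ, j ≤ n + 1 → |g n j - (1 - Real.exp (-(c * (j / n))))| ≤ η n) :
    Tendsto (fun n : ℕ => (1 / (n : ℝ)) * ∑ j ∈ Finset.range (⌊(n : ℝ) * t⌋₊ + 2), g n j ^ 2) atTop
      (nhds (∫ s in (0:ℝ)..t, (1 - Real.exp (-c * (t - s))) ^ 2)) := by
  set G : ℝ → ℝ := fun x => (1 - Real.exp (-(c * x))) ^ 2 with hG
  have hGc : Continuous G := by fun_prop
  have hI : (∫ s in (0:ℝ)..t, (1 - Real.exp (-c * (t - s))) ^ 2) = ∫ s in (0:ℝ)..t, G s := by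
    have := intervalIntegral.integral_comp_sub_left (a := 0) (b := t) G t
    simp only [sub_self, sub_zero] at this
    rw [← this]
    simp only [hG, neg_mul]
  rw [hI]
  have hF : ∀ x : ℝ, 0 ≤ x → 0 ≤ 1 - Real.exp (-(c * x)) ∧ 1 - Real.exp (-(c * x)) ≤ 1 := by
    intro x hx
    have h1 : Real.exp (-(c * x)) ≤ 1 := Real.exp_le_one_iff.mpr (by nlinarith)
    have h2 := Real.exp_pos (-(c * x))
    constructor <;> linarith
  have hG01 : ∀ x : ℝ, 0 ≤ x → 0 ≤ G x ∧ G x ≤ 1 := by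
    intro x hx
    have := hF x hx
    simp only [hG]
    constructor <;> nlinarith
  have hGm : ∀ x y : ℝ, 0 ≤ x → x ≤ y → G x ≤ G y := by
    intro x y hx hxy
    have h1 := hF x hx
    have h3 : Real.exp (-(c * y)) ≤ Real.exp (-(c * x)) := Real.exp_le_exp.mpr (by nlinarith)
    simp only [hG]
    exact pow_le_pow_left₀ h1.1 (by linarith) 2
  set N : ℕ → ℕ := fun n => ⌊(n : ℝ) * t⌋₊ with hN
  have hNn : ∀ n, N n ≤ n := by
    intro n
    have : (n : ℝ) * t ≤ n := mul_le_of_le_one_right (by positivity) ht.2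
    calc N n ≤ ⌊(n : ℝ)⌋₊ := Nat.floor_le_floor this
      _ = n := Nat.floor_natCast n
  have hlim1 : Tendsto (fun n : ℕ => ((N n + 2 : ℕ) : ℝ) / n) atTop (nhds t) := by
    have h1 : Tendsto (fun n : ℕ => t + 2 / (n : ℝ)) atTop (nhds (t + 0)) :=
      tendsto_const_nhds.add (tendsto_const_nhds.div_atTop tendsto_natCast_atTop_atTop)
    rw [add_zero] at h1
    refine tendsto_of_tendsto_of_tendsto_of_le_of_le' tendsto_const_nhds h1 ?_ ?_
    · filter_upwards [eventually_ge_atTop 1] with n hn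
      have hn0 : (0 : ℝ) < n := by exact_mod_cast hn
      rw [le_div_iff₀ hn0]
      have := Nat.lt_floor_add_one ((n : ℝ) * t)
      push_cast
      simp only [hN]
      linarith
    · filter_upwards [eventually_ge_atTop 1] with n hn
      have hn0 : (0 : ℝ) < n := by exact_mod_cast hn
      rw [div_le_iff₀ hn0, add_mul, div_mul_cancel₀ _ hn0.ne']
      have := Nat.floor_le (mul_nonneg hn0.le ht.1)
      push_cast
      simp only [hN]
      linarith
  have hlim2 : Tendsto (fun n : ℕ => ∫ s in (0:ℝ)..(((N n + 2 : ℕ) : ℝ) / n), G s) atTop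
      (nhds (∫ s in (0:ℝ)..t, G s)) := by
    have : Continuous fun b => ∫ s in (0:ℝ)..b, G s :=
      intervalIntegral.continuous_primitive (fun a b => hGc.intervalIntegrable a b) 0
    exact (this.tendsto t).comp hlim1
  have hclose : ∀ n : ℕ, 1 ≤ n → |(1 / (n : ℝ)) * ∑ j ∈ Finset.range (N n + 2), g n j ^ 2 -
      ∫ s in (0:ℝ)..(((N n + 2 : ℕ) : ℝ) / n), G s| ≤ 6 * η n + 1 / n := by
    intro n hn
    have hn0 : (0 : ℝ) < n := by exact_mod_cast hn
    have hn1 : (1 : ℝ) ≤ n := by exact_mod_cast hn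
    have hη0 : 0 ≤ η n := (abs_nonneg _).trans (hgF n hn 0 (by omega))
    have hmono : MonotoneOn (fun x => G (x / n)) (Set.Icc (0:ℝ) (0 + ((N n + 2 : ℕ) : ℝ))) := by
      intro x hx y hy hxy
      exact hGm _ _ (div_nonneg hx.1 hn0.le) (by gcongr)
    have s1 := hmono.sum_le_integral
    have s2 := hmono.integral_le_sum
    have s3 : ∫ x in (0:ℝ)..((N n + 2 : ℕ) : ℝ), G (x / n) =
        n * ∫ s in (0:ℝ)..(((N n + 2 : ℕ) : ℝ) / n), G s := by
      rw [intervalIntegral.integral_comp_div _ hn0.ne']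
      simp
    simp only [zero_add] at s1 s2
    rw [s3] at s1 s2
    have s4 : ∑ i ∈ Finset.range (N n + 2), G (((i + 1 : ℕ) : ℝ) / n) =
        ∑ i ∈ Finset.range (N n + 2), G ((i : ℝ) / n) + G (((N n + 2 : ℕ) : ℝ) / n) - G 0 := by
      have := Finset.sum_range_succ (fun i : ℕ => G ((i : ℝ) / n)) (N n + 2)
      rw [Finset.sum_range_succ'] at this
      simp only [Nat.cast_zero, zero_div] at this
      linarith
    rw [s4] at s2
    have s5 : |∑ j ∈ Finset.range (N n + 2), g n j ^ 2 - ∑ i ∈ Finset.range (N n + 2), G ((i : ℝ) / n)|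
        ≤ 6 * η n * n := by
      rw [← Finset.sum_sub_distrib]
      refine (Finset.abs_sum_le_sum_abs _ _).trans ?_
      calc _ ≤ ∑ j ∈ Finset.range (N n + 2), 2 * η n := by
            refine Finset.sum_le_sum fun j hj => ?_
            rw [Finset.mem_range] at hj
            have h1 := hgF n hn j (by have := hNn n; omega)
            have h2 := hg n hn j
            have h3 := hF ((j : ℝ) / n) (by positivity)
            simp only [hG]
            rw [sq_sub_sq, abs_mul, abs_of_nonneg (add_nonneg h2.1 h3.1)]
            exact mul_le_mul (by linarith) h1 (abs_nonneg _) (by norm_num)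
        _ = (N n + 2) * (2 * η n) := by simp
        _ ≤ (3 * n) * (2 * η n) := by
            have : (N n : ℝ) ≤ n := by exact_mod_cast hNn n
            gcongr; linarith
        _ = _ := by ring
    have h0 := (hG01 0 le_rfl).1
    have h1 := (hG01 (((N n + 2 : ℕ) : ℝ) / n) (by positivity)).2
    rw [abs_le] at s5
    set I := ∫ s in (0:ℝ)..(((N n + 2 : ℕ) : ℝ) / n), G s
    set X := ∑ j ∈ Finset.range (N n + 2), g n j ^ 2
    have e : (1 / (n : ℝ)) * X - I = (X - n * I) / n := by field_simp
    have e' : 6 * η n + 1 / n = (6 * η n * n + 1) / n := by field_simp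
    rw [e, e', abs_div, abs_of_pos hn0]
    gcongr
    rw [abs_le]
    constructor <;> linarith
  have hz : Tendsto (fun n : ℕ => 6 * η n + 1 / (n : ℝ)) atTop (nhds 0) := by
    simpa using (hη.const_mul 6).add tendsto_one_div_atTop_nhds_zero_nat
  have hd : Tendsto (fun n : ℕ => (1 / (n : ℝ)) * ∑ j ∈ Finset.range (N n + 2), g n j ^ 2 -
      ∫ s in (0:ℝ)..(((N n + 2 : ℕ) : ℝ) / n), G s) atTop (nhds 0) := by
    refine squeeze_zero_norm' ?_ hz
    filter_upwards [eventually_ge_atTop 1] with n hn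
    exact hclose n hn
  simpa using hd.add hlim2

lemma norm_prod_sub_prod_le_sum (s : Finset ℕ) (z w : ℕ → ℂ) (hz : ∀ i ∈ s, ‖z i‖ ≤ 1)
    (hw : ∀ i ∈ s, ‖w i‖ ≤ 1) :
    ‖∏ i ∈ s, z i - ∏ i ∈ s, w i‖ ≤ ∑ i ∈ s, ‖z i - w i‖ := by
  induction s using Finset.induction_on with
  | empty => simp
  | insert i s hi ih =>
    rw [Finset.prod_insert hi, Finset.prod_insert hi, Finset.sum_insert hi]
    have h1 := ih (fun j hj => hz j (Finset.mem_insert_of_mem hj))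
      (fun j hj => hw j (Finset.mem_insert_of_mem hj))
    have h2 : ‖∏ i ∈ s, w i‖ ≤ 1 := by
      rw [norm_prod]
      exact Finset.prod_le_one (fun _ _ => norm_nonneg _)
        (fun j hj => hw j (Finset.mem_insert_of_mem hj))
    have h3 := hz i (Finset.mem_insert_self _ _)
    calc _ = ‖z i * (∏ i ∈ s, z i - ∏ i ∈ s, w i) + (z i - w i) * ∏ i ∈ s, w i‖ := by
          congr 1; ring
      _ ≤ ‖z i‖ * ‖∏ i ∈ s, z i - ∏ i ∈ s, w i‖ + ‖z i - w i‖ * ‖∏ i ∈ s, w i‖ := by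
          refine (norm_add_le _ _).trans ?_
          rw [norm_mul, norm_mul]
      _ ≤ 1 * ‖∏ i ∈ s, z i - ∏ i ∈ s, w i‖ + ‖z i - w i‖ * 1 := by gcongr
      _ ≤ _ := by linarith

lemma gauss_littleO :
    (fun t : ℝ => Complex.exp (-((t : ℂ) ^ 2 / 2)) - (1 - (t : ℂ) ^ 2 / 2)) =o[nhds 0]
      fun t : ℝ => t ^ 2 := by
  rw [Asymptotics.isLittleO_iff]
  intro c hc
  have h1 : ∀ᶠ t : ℝ in nhds 0, |t| < min 1 c := by
    have : Tendsto (fun t : ℝ => |t|) (nhds 0) (nhds 0) := by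
      simpa using (continuous_abs.tendsto (0 : ℝ))
    exact this.eventually_lt_const (lt_min one_pos hc)
  filter_upwards [h1] with t ht
  have ht1 : |t| < 1 := ht.trans_le (min_le_left _ _)
  have ht2 : |t| < c := ht.trans_le (min_le_right _ _)
  have hn : ‖-((t : ℂ) ^ 2 / 2)‖ = t ^ 2 / 2 := by
    rw [norm_neg, norm_div, norm_pow, Complex.norm_real, Real.norm_eq_abs, sq_abs]
    simp
  have hsq : t ^ 2 = |t| * |t| := by rw [← sq, sq_abs]
  have h0 := abs_nonneg t
  have hle : ‖-((t : ℂ) ^ 2 / 2)‖ ≤ 1 := by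
    rw [hn]; nlinarith
  have := Complex.norm_exp_sub_one_sub_id_le hle
  rw [hn] at this
  rw [show Complex.exp (-((t : ℂ) ^ 2 / 2)) - (1 - (t : ℂ) ^ 2 / 2) =
    Complex.exp (-((t : ℂ) ^ 2 / 2)) - 1 - (-((t : ℂ) ^ 2 / 2)) by ring]
  refine this.trans ?_
  rw [Real.norm_of_nonneg (sq_nonneg t)]
  have : t ^ 2 ≤ c := by rw [hsq]; nlinarith
  nlinarith [sq_nonneg t]

lemma weighted_clt {Ω : Type*} [MeasurableSpace Ω] (P : Measure Ω) [IsProbabilityMeasure P]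
    (ε : ℕ → Ω → ℝ) (hεmeas : ∀ k, Measurable (ε k))
    (hεindep : iIndepFun ε P)
    (hεid : ∀ k, Measure.map (ε k) P = Measure.map (ε 0) P)
    (hεmean : ∫ ω, ε 0 ω ∂P = 0)
    (hεvar : ∫ ω, (ε 0 ω) ^ 2 ∂P = 1)
    (K : ℕ → ℕ) (w : ℕ → ℕ → ℝ) (B : ℕ → ℝ) (hB : Tendsto B atTop (nhds 0))
    (hw : ∀ᶠ n in atTop, ∀ k < K n, |w n k| ≤ B n) (v : ℝ) (hv0 : 0 ≤ v)
    (hv : Tendsto (fun n => ∑ k ∈ Finset.range (K n), w n k ^ 2) atTop (nhds v))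
    (f : BoundedContinuousFunction ℝ ℝ) :
    Tendsto (fun n : ℕ => ∫ ω, f (∑ k ∈ Finset.range (K n), w n k * ε k ω) ∂P) atTop
      (nhds (∫ x, f x ∂(gaussianReal 0 (Real.toNNReal v)))) := by
  set X : ℕ → Ω → ℝ := fun n ω => ∑ k ∈ Finset.range (K n), w n k * ε k ω with hX
  have hXm : ∀ n, Measurable (X n) := fun n =>
    Finset.measurable_sum _ fun k _ => (hεmeas k).const_mul _
  set ch := charFun (P.map (ε 0)) with hch
  have hp : ∀ k, IsProbabilityMeasure (P.map (ε k)) := fun k =>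
    Measure.isProbabilityMeasure_map (hεmeas k).aemeasurable
  have hchar : ∀ n u, charFun (P.map (X n)) u = ∏ k ∈ Finset.range (K n), ch (w n k * u) := by
    intro n u
    have hind : iIndepFun (fun k ω => w n k * ε k ω) P :=
      hεindep.comp (fun k x => w n k * x) (fun k => measurable_const_mul _)
    have := (hind.restrict (Finset.range (K n))).charFun_map_fun_finsetSum_eq_prod
      (fun k _ => ((hεmeas k).const_mul _).aemeasurable)
    rw [hX]
    simp only
    rw [this, Finset.prod_apply]
    refine Finset.prod_congr rfl fun k _ => ?_
    rw [charFun_map_mul_comp (hεmeas k).aemeasurable, hεid]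
  have hlo : (fun t : ℝ => ch t - Complex.exp (-((t : ℂ) ^ 2 / 2))) =o[nhds 0]
      fun t : ℝ => t ^ 2 := by
    have h1 := taylor_charFun_two (hεmeas 0).aemeasurable hεmean hεvar
    have h2 := h1.sub gauss_littleO
    refine h2.congr_left fun t => ?_
    ring
  have hlim : ∀ u : ℝ, Tendsto (fun n => charFun (P.map (X n)) u) atTop
      (nhds (charFun (gaussianReal 0 (Real.toNNReal v)) u)) := by
    intro u
    have hg : Tendsto (fun n => ∏ k ∈ Finset.range (K n),
        Complex.exp (-(((w n k * u : ℝ) : ℂ) ^ 2 / 2))) atTop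
        (nhds (charFun (gaussianReal 0 (Real.toNNReal v)) u)) := by
      rw [charFun_gaussianReal]
      have e : ∀ n, ∏ k ∈ Finset.range (K n), Complex.exp (-(((w n k * u : ℝ) : ℂ) ^ 2 / 2)) =
          Complex.exp (((-(∑ k ∈ Finset.range (K n), w n k ^ 2) * u ^ 2 / 2 : ℝ) : ℂ)) := by
        intro n
        rw [← Complex.exp_sum]
        congr 1
        push_cast
        rw [neg_mul, neg_div, Finset.sum_mul, Finset.sum_div, ← Finset.sum_neg_distrib]
        exact Finset.sum_congr rfl fun k _ => by ring
      simp_rw [e]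
      refine (Complex.continuous_exp.tendsto _).comp ?_
      have e2 : ((u : ℂ) * ((0 : ℝ) : ℂ) * Complex.I - ((v.toNNReal : NNReal) : ℂ) * (u : ℂ) ^ 2 / 2) =
          ((-v * u ^ 2 / 2 : ℝ) : ℂ) := by
        have : ((v.toNNReal : NNReal) : ℂ) = ((v : ℝ) : ℂ) :=
          congrArg Complex.ofReal (Real.coe_toNNReal v hv0)
        rw [this]
        push_cast; ring
      rw [e2]
      exact (Complex.continuous_ofReal.tendsto _).comp (((hv.neg).mul_const _).div_const _)
    have hd : Tendsto (fun n => charFun (P.map (X n)) u - ∏ k ∈ Finset.range (K n),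
        Complex.exp (-(((w n k * u : ℝ) : ℂ) ^ 2 / 2))) atTop (nhds 0) := by
      rw [Metric.tendsto_nhds]
      intro e he
      set c : ℝ := e / (2 * ((v + 1) * u ^ 2 + 1)) with hc
      have hpos : 0 < (v + 1) * u ^ 2 + 1 := by positivity
      have hc0 : 0 < c := by positivity
      have h1 := (Asymptotics.isLittleO_iff.mp hlo) hc0
      rw [Metric.eventually_nhds_iff] at h1
      obtain ⟨r, hr, h1⟩ := h1
      have hBu : Tendsto (fun n => B n * |u|) atTop (nhds 0) := by
        simpa using hB.mul_const |u|
      filter_upwards [hw, hBu.eventually_lt_const hr,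
        hv.eventually_lt_const (by linarith : v < v + 1)] with n hn1 hn2 hn3
      rw [dist_zero_right, hchar]
      refine (norm_prod_sub_prod_le_sum _ _ _ ?_ ?_).trans_lt ?_
      · intro k _
        exact norm_charFun_le_one _
      · intro k _
        rw [Complex.norm_exp]
        rw [Real.exp_le_one_iff]
        rw [show (-(((w n k * u : ℝ) : ℂ) ^ 2 / 2)) = ((-((w n k * u) ^ 2 / 2) : ℝ) : ℂ) by push_cast; ring,
          Complex.ofReal_re]
        have := sq_nonneg (w n k * u)
        linarith
      · calc _ ≤ ∑ k ∈ Finset.range (K n), c * (w n k * u) ^ 2 := by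
              refine Finset.sum_le_sum fun k hk => ?_
              have h3 : dist (w n k * u) 0 < r := by
                rw [dist_zero_right, Real.norm_eq_abs, abs_mul]
                refine lt_of_le_of_lt ?_ hn2
                have := hn1 k (Finset.mem_range.mp hk)
                gcongr
              have := h1 h3
              rwa [Real.norm_of_nonneg (sq_nonneg _)] at this
          _ = c * (u ^ 2 * ∑ k ∈ Finset.range (K n), w n k ^ 2) := by
              rw [Finset.mul_sum, Finset.mul_sum]
              exact Finset.sum_congr rfl fun k _ => by ring
          _ ≤ c * ((v + 1) * u ^ 2 + 1) := by
              have := sq_nonneg u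
              gcongr
              nlinarith
          _ = e / 2 := by rw [hc]; field_simp
          _ < e := by linarith
    simpa using hd.add hg
  have hpX : ∀ n, IsProbabilityMeasure (P.map (X n)) := fun n =>
    Measure.isProbabilityMeasure_map (hXm n).aemeasurable
  have hconv := (ProbabilityMeasure.tendsto_iff_tendsto_charFun
    (μ := fun n => (⟨P.map (X n), hpX n⟩ : ProbabilityMeasure ℝ))
    (μ₀ := ⟨gaussianReal 0 (Real.toNNReal v), inferInstance⟩)).mpr hlim
  have := (ProbabilityMeasure.tendsto_iff_forall_integral_tendsto.mp hconv) f
  refine this.congr fun n => ?_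
  exact integral_map (hXm n).aemeasurable f.continuous.aestronglyMeasurable

lemma y_rep (a : ℝ) (φ : ℕ → ℝ) (e y : ℕ → ℝ) (hy0 : y 0 = e 0)
    (hy : ∀ k, 1 ≤ k → y k = e k + ∑ i ∈ Finset.Icc 1 k, a * φ i * y (k - i)) (k : ℕ) :
    y k = ∑ j ∈ Finset.range (k + 1), psiA a φ (k - j) * e j := by
  induction k using Nat.strong_induction_on with
  | _ k ih =>
    cases k with
    | zero => simp [psiA_zero, hy0]
    | succ k =>
      rw [hy (k + 1) (by omega), Finset.sum_range_succ, add_comm]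
      congr 1
      · have h1 : ∑ i ∈ Finset.Icc 1 (k + 1), a * φ i * y (k + 1 - i) =
            ∑ i ∈ Finset.range (k + 1), a * φ (i + 1) * y (k - i) := by
          rw [← Finset.Ico_add_one_right_eq_Icc, Finset.sum_Ico_eq_sum_range]
          refine Finset.sum_congr (by simp) fun i _ => ?_
          rw [add_comm 1 i, show k + 1 - (i + 1) = k - i by omega]
        rw [h1]
        have h2 : ∀ i ∈ Finset.range (k + 1), a * φ (i + 1) * y (k - i) =
            ∑ j ∈ Finset.range (k - i + 1), a * φ (i + 1) * (psiA a φ (k - i - j) * e j) := by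
          intro i _
          rw [ih (k - i) (by omega), Finset.mul_sum]
        have h3 : ∀ j ∈ Finset.range (k + 1), psiA a φ (k + 1 - j) * e j =
            ∑ i ∈ Finset.range (k - j + 1), a * φ (i + 1) * (psiA a φ (k - i - j) * e j) := by
          intro j hj
          rw [Finset.mem_range] at hj
          rw [show k + 1 - j = k - j + 1 by omega, psiA_succ, Finset.sum_mul]
          refine Finset.sum_congr rfl fun i _ => ?_
          rw [show k - j - i = k - i - j by omega]
          ring
        rw [Finset.sum_congr rfl h2, Finset.sum_congr rfl h3]
        refine Finset.sum_comm' fun i j => ?_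
        simp only [Finset.mem_range]
        omega
      · simp [psiA_zero]

lemma sum_rep (a : ℝ) (φ : ℕ → ℝ) (e : ℕ → ℝ) (N : ℕ) :
    ∑ k ∈ Finset.range (N + 1), ∑ j ∈ Finset.range (k + 1), psiA a φ (k - j) * e j =
      ∑ j ∈ Finset.range (N + 1), SA a φ (N - j) * e j := by
  induction N with
  | zero => simp [psiA_zero, SA_zero]
  | succ N ih =>
    rw [Finset.sum_range_succ, ih, Finset.sum_range_succ _ (N + 1), Finset.sum_range_succ _ (N + 1),
      ← add_assoc, ← Finset.sum_add_distrib]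
    congr 1
    · refine Finset.sum_congr rfl fun j hj => ?_
      rw [Finset.mem_range] at hj
      rw [show N + 1 - j = N - j + 1 by omega, SA_succ]
      ring
    · simp [psiA_zero, SA_zero]

/-- one-dimensional marginal convergence in the light-tail case:
`Z^n_t` converges in distribution to a centered Gaussian with variance
`∫_0^t (1 − e^{−(λ/m)(t−s)})² ds`. -/
theorem donsker_line_marginal_light_tail
    {Ω : Type*} [MeasurableSpace Ω] (P : Measure Ω) [IsProbabilityMeasure P]
    (φ : ℕ → ℝ) (hφnn : ∀ i, 0 ≤ φ i) (hφ0 : φ 0 = 0) (hφsum : ∑' i : ℕ, φ i = 1)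
    (m : ℝ) (hm : HasSum (fun i : ℕ => (i : ℝ) * φ i) m)
    (a : ℕ → ℝ) (ha : ∀ n, 1 ≤ n → 0 < a n ∧ a n < 1)
    (lam : ℝ) (hlam : 0 < lam)
    (haconv : Tendsto (fun n : ℕ => (n : ℝ) * (1 - a n)) atTop (nhds lam))
    -- the `ε_k` are iid, square integrable, centered with unit variance
    (ε : ℕ → Ω → ℝ) (hεmeas : ∀ k, Measurable (ε k))
    (hεindep : iIndepFun ε P)
    (hεid : ∀ k, Measure.map (ε k) P = Measure.map (ε 0) P)
    (hεL2 : MemLp (ε 0) 2 P)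
    (hεmean : ∫ ω, ε 0 ω ∂P = 0)
    (hεvar : ∫ ω, (ε 0 ω) ^ 2 ∂P = 1)
    (y : ℕ → ℕ → Ω → ℝ)
    (hy0 : ∀ n, y n 0 = ε 0)
    (hyrec : ∀ n k, 1 ≤ k → ∀ ω,
      y n k ω = ε k ω + ∑ i ∈ Finset.Icc 1 k, a n * φ i * y n (k - i) ω)
    -- the renormalized Donsker line
    (Z : ℕ → ℝ → Ω → ℝ)
    (hZ : ∀ n t ω, Z n t ω = (1 - a n) / Real.sqrt n *
      ((∑ j ∈ Finset.range (⌊(n : ℝ) * t⌋₊ + 1), y n j ω) +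
        ((n : ℝ) * t - (⌊(n : ℝ) * t⌋₊ : ℝ)) * y n (⌊(n : ℝ) * t⌋₊ + 1) ω))
    : ∀ t ∈ Set.Icc (0:ℝ) 1, ∀ f : BoundedContinuousFunction ℝ ℝ,
        Tendsto (fun n : ℕ => ∫ ω, f (Z n t ω) ∂P) atTop
          (nhds (∫ x, f x ∂(gaussianReal 0
            (Real.toNNReal (∫ s in (0:ℝ)..t,
              (1 - Real.exp (-(lam / m) * (t - s))) ^ 2))))) := by
  intro t ht f
  have hφs : HasSum φ 1 := by
    have : Summable φ := by
      by_contra h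
      rw [tsum_eq_zero_of_not_summable h] at hφsum
      exact zero_ne_one hφsum
    rw [← hφsum]; exact this.hasSum
  have hm0 : 0 < m := by
    have : 1 ≤ m := by
      refine hasSum_le (fun i => ?_) hφs hm
      cases i with
      | zero => simp [hφ0]
      | succ i =>
        have := hφnn (i + 1)
        have hi : (0 : ℝ) ≤ i := Nat.cast_nonneg i
        push_cast
        nlinarith
    linarith
  have h1a : Tendsto (fun n => 1 - a n) atTop (nhds 0) := by
    have h := haconv.mul (tendsto_one_div_atTop_nhds_zero_nat (𝕜 := ℝ))
    rw [mul_zero] at h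
    refine h.congr' ?_
    filter_upwards [eventually_ge_atTop 1] with n hn
    have hn0 : (n : ℝ) ≠ 0 := by positivity
    field_simp
  have ha1 : Tendsto a atTop (nhds 1) := by
    simpa using (tendsto_const_nhds (x := (1:ℝ))).sub h1a
  obtain ⟨η, hη, hηb⟩ := bA_uniform φ hφnn hφ0 hφs m hm0 hm a ha lam hlam haconv ha1
  set N : ℕ → ℕ := fun n => ⌊(n : ℝ) * t⌋₊ with hN
  set θ : ℕ → ℝ := fun n => (n : ℝ) * t - (N n : ℝ) with hθ
  have hθ01 : ∀ n, 0 ≤ θ n ∧ θ n ≤ 1 := by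
    intro n
    have h1 := Nat.floor_le (mul_nonneg (Nat.cast_nonneg n) ht.1 : 0 ≤ (n : ℝ) * t)
    have h2 := Nat.lt_floor_add_one ((n : ℝ) * t)
    simp only [hθ, hN]
    constructor <;> linarith
  -- coefficients
  set g : ℕ → ℕ → ℝ := fun n j => (1 - a n) * (SA (a n) φ j - psiA (a n) φ j + θ n * psiA (a n) φ j)
    with hg
  have hgb : ∀ n j, g n j = bA (a n) φ j - (1 - a n) * ((1 - θ n) * psiA (a n) φ j) := by
    intro n j
    simp only [hg, bA]; ring
  have hpb : ∀ n, 1 ≤ n → ∀ j, 0 ≤ (1 - θ n) * psiA (a n) φ j ∧ (1 - θ n) * psiA (a n) φ j ≤ 1 := by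
    intro n hn j
    have h1 := hθ01 n
    have h2 := psiA_bounds (a n) (ha n hn) φ hφnn hφs j
    constructor <;> nlinarith
  have hg01 : ∀ n, 1 ≤ n → ∀ j, 0 ≤ g n j ∧ g n j ≤ 1 := by
    intro n hn j
    have h1 := hθ01 n
    have h2 := psiA_bounds (a n) (ha n hn) φ hφnn hφs j
    have h3 := ha n hn
    have h4 := hpb n hn j
    have h5 := bA_bounds (a n) (ha n hn) φ hφnn hφs j
    constructor
    · refine mul_nonneg (by linarith) (add_nonneg ?_ (mul_nonneg h1.1 h2.1))
      have : psiA (a n) φ j ≤ SA (a n) φ j := by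
        unfold SA
        exact Finset.single_le_sum (f := psiA (a n) φ)
          (fun i _ => (psiA_bounds (a n) (ha n hn) φ hφnn hφs i).1) (by simp)
      linarith
    · rw [hgb]
      have := mul_nonneg (by linarith : 0 ≤ 1 - a n) h4.1
      linarith
  have hgF : ∀ n, 1 ≤ n → ∀ j : ℕ, j ≤ n + 1 →
      |g n j - (1 - Real.exp (-((lam / m) * (j / n))))| ≤ η n + (1 - a n) := by
    intro n hn j hj
    have h1 := hηb n hn j hj
    have h4 := hpb n hn j
    have h3 := ha n hn
    have h5 := mul_nonneg (by linarith : 0 ≤ 1 - a n) h4.1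
    have h6 := mul_le_of_le_one_right (by linarith : 0 ≤ 1 - a n) h4.2
    rw [hgb]
    rw [abs_le] at h1 ⊢
    constructor <;> linarith
  have hvar := riemann_lim (lam / m) (div_pos hlam hm0) t ht g (fun n => η n + (1 - a n))
    (by simpa using hη.add h1a) hg01 hgF
  -- representation
  have hyrep : ∀ n k ω, y n k ω = ∑ j ∈ Finset.range (k + 1), psiA (a n) φ (k - j) * ε j ω := by
    intro n k ω
    refine y_rep (a n) φ (fun k => ε k ω) (fun k => y n k ω) (by simp [hy0]) (fun k hk => ?_) k
    exact hyrec n k hk ω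
  have hZrep : ∀ n ω, Z n t ω =
      ∑ k ∈ Finset.range (N n + 2), (g n (N n + 1 - k) / Real.sqrt n) * ε k ω := by
    intro n ω
    rw [hZ]
    have e1 : ∑ j ∈ Finset.range (N n + 1), y n j ω =
        ∑ k ∈ Finset.range (N n + 1), SA (a n) φ (N n - k) * ε k ω := by
      simp_rw [hyrep]
      exact sum_rep (a n) φ (fun k => ε k ω) (N n)
    have e2 := hyrep n (N n + 1) ω
    change (1 - a n) / Real.sqrt n * ((∑ j ∈ Finset.range (N n + 1), y n j ω) +
        θ n * y n (N n + 1) ω) = _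
    rw [e1, e2, Finset.sum_range_succ _ (N n + 1), Finset.sum_range_succ _ (N n + 1), mul_add (θ n),
      ← add_assoc, Finset.mul_sum (Finset.range (N n + 1)), ← Finset.sum_add_distrib, mul_add,
      Finset.mul_sum]
    congr 1
    · refine Finset.sum_congr rfl fun k hk => ?_
      rw [Finset.mem_range] at hk
      simp only [hg]
      rw [show N n + 1 - k = N n - k + 1 by omega, SA_succ]
      ring
    · simp only [hg, Nat.sub_self, SA_zero, psiA_zero]
      ring
  simp_rw [hZrep]
  refine weighted_clt P ε hεmeas hεindep hεid hεmean hεvar (fun n => N n + 2)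
    (fun n k => g n (N n + 1 - k) / Real.sqrt n) (fun n => (Real.sqrt n)⁻¹) ?_ ?_ _ ?_ ?_ f
  · exact tendsto_inv_atTop_zero.comp (Real.tendsto_sqrt_atTop.comp tendsto_natCast_atTop_atTop)
  · filter_upwards [eventually_ge_atTop 1] with n hn k _
    have h := hg01 n hn (N n + 1 - k)
    rw [abs_of_nonneg (div_nonneg h.1 (Real.sqrt_nonneg _)), div_eq_mul_inv]
    exact mul_le_of_le_one_left (inv_nonneg.mpr (Real.sqrt_nonneg _)) h.2
  · exact intervalIntegral.integral_nonneg ht.1 fun s _ => sq_nonneg _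
  · refine hvar.congr fun n => ?_
    have := Finset.sum_range_reflect (fun j => g n j ^ 2) (N n + 2)
    change 1 / (n : ℝ) * ∑ j ∈ Finset.range (N n + 2), g n j ^ 2 = _
    rw [← this, Finset.mul_sum]
    refine Finset.sum_congr rfl fun k hk => ?_
    rw [show N n + 2 - 1 - k = N n + 1 - k by omega, div_pow, Real.sq_sqrt (Nat.cast_nonneg n)]
    ring
end
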